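/- arXiv:1712.03663 — 2 statements merged into one kernel-verified Lean document; each statement's English description precedes it below -/
import Mathlib

section
/- Let R be a local complete intersection and let M, N be nonzero finitely generated R-modules such that Ext^i_R(M,N) = 0 for all i ≫ 0. Then Ext^i_R(M,N) = 0 for all i > depth(R) − depth_R(M); moreover, if depth_R(M) < depth(R), then Ext^{depth(R) − depth_R(M)}_R(M,N) ≠ 0. -/
/-!
The local complete intersection `R` is a quotient `S/(x₁, …, x_c)` of a regular local ring. Write
`d = depth S` and let `q` be the projective dimension of `M` over `S`. Then `depth M = d - q` by
the Auslander–Buchsbaum formula, and `depth R = d - c` by the same formula applied to the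
`S`-module `R`, whose projective dimension is the length `c` of the regular sequence. Here depth may
be computed over `R` or over `S`, because by Rees' theorem it is the length of a maximal regular
sequence (`CI.hasDepth_iff_of_surjective`). So `depth R - depth M = q - c`, and the theorem says
that `Ext_R(M, N)`, if it vanishes in large degrees, vanishes above degree `q - c`, and that it
is nonzero in degree `q - c` when this is positive.

Over `S` itself the statement holds with `c = 0`: `Ext_S^i(M, N)` vanishes for `i > q`, and
`Ext_S^q(M, N) ≠ 0` by a minimal resolution and Nakayama's lemma (`CI.ab_aux`, `CI.exists_pd`).

It remains to see that these degrees drop by one when a ring `Q` is replaced by its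
quotient `R = Q/(x)` by a regular element (`CI.ExtPattern.quotient`). Let `0 → K → F → M → 0` be
exact over `Q` with `F` free. Tensoring with `R` gives an exact sequence
`0 → M → R ⊗ K → R ⊗ F → M → 0`, because `Tor₁(R, M) = M`. As `x` is regular on `K`,
`Ext_R^i(R ⊗ K, N)` vanishes exactly when `Ext_Q^i(K, N)`, that is `Ext_Q^{i+1}(M, N)`, does
(`CI.ext_baseChange_iff`). With `L` the kernel of `R ⊗ F → M`, the long exact sequence of
`0 → M → R ⊗ K → L → 0` then reads
`Ext_R^{i+1}(M, N) → Ext_Q^{i+1}(M, N) → Ext_R^i(M, N) → Ext_R^{i+2}(M, N)`.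
If `Ext_R` vanishes in large degrees, so does `Ext_Q`, and descending induction along this sequence
carries both halves of the statement from `Q` to `R`.

Only the vanishing of Ext groups is ever compared, so the isomorphisms above appear as
equivalences between `Subsingleton` statements.
-/

open CategoryTheory TensorProduct

/-- The Ext group `Ext^i_R(M,N)` as a type. -/
noncomputable def ExtM (R : Type) [CommRing R] (M N : Type) [AddCommGroup M] [Module R M]
    [AddCommGroup N] [Module R N] (i : ℕ) : Type :=
  ((Ext R (ModuleCat R) i).obj (Opposite.op (ModuleCat.of R M))).obj (ModuleCat.of R N)


noncomputable instance (R : Type) [CommRing R] (M N : Type) [AddCommGroup M] [Module R M]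
    [AddCommGroup N] [Module R N] (i : ℕ) : AddCommGroup (ExtM R M N i) :=
  inferInstanceAs (AddCommGroup
    (((Ext R (ModuleCat R) i).obj (Opposite.op (ModuleCat.of R M))).obj (ModuleCat.of R N)))

noncomputable instance (R : Type) [CommRing R] (M N : Type) [AddCommGroup M] [Module R M]
    [AddCommGroup N] [Module R N] (i : ℕ) : Module R (ExtM R M N i) :=
  inferInstanceAs (Module R
    (((Ext R (ModuleCat R) i).obj (Opposite.op (ModuleCat.of R M))).obj (ModuleCat.of R N)))

/-- The Tor group `Tor_i^R(M,N)` as a type. -/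
noncomputable def TorM (R : Type) [CommRing R] (M N : Type) [AddCommGroup M] [Module R M]
    [AddCommGroup N] [Module R N] (i : ℕ) : Type :=
  ((Tor (ModuleCat R) i).obj (ModuleCat.of R M)).obj (ModuleCat.of R N)

noncomputable instance (R : Type) [CommRing R] (M N : Type) [AddCommGroup M] [Module R M]
    [AddCommGroup N] [Module R N] (i : ℕ) : AddCommGroup (TorM R M N i) :=
  inferInstanceAs (AddCommGroup
    (((Tor (ModuleCat R) i).obj (ModuleCat.of R M)).obj (ModuleCat.of R N)))

noncomputable instance (R : Type) [CommRing R] (M N : Type) [AddCommGroup M] [Module R M]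
    [AddCommGroup N] [Module R N] (i : ℕ) : Module R (TorM R M N i) :=
  inferInstanceAs (Module R
    (((Tor (ModuleCat R) i).obj (ModuleCat.of R M)).obj (ModuleCat.of R N)))

/-- The depth of a module over a local ring, via Rees' theorem:
`depth M = inf { i | Ext^i(k, M) ≠ 0 }` (so the zero module has depth `⊤`). -/
noncomputable def depthM (R : Type) [CommRing R] [IsLocalRing R] (M : Type) [AddCommGroup M]
    [Module R M] : ℕ∞ :=
  sInf {i : ℕ∞ | ∃ n : ℕ, i = n ∧ ¬ Subsingleton (ExtM R (IsLocalRing.ResidueField R) M n)}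

/-- A maximal Cohen-Macaulay module: a nonzero finitely generated module whose
depth equals the Krull dimension of the ring. -/
def IsMCM (R : Type) [CommRing R] [IsLocalRing R] (M : Type) [AddCommGroup M] [Module R M] :
    Prop :=
  Nontrivial M ∧ Module.Finite R M ∧ (depthM R M : WithBot ℕ∞) = ringKrullDim R

/-- A regular local ring: a Noetherian local ring whose maximal ideal is generated by a
regular sequence. -/
def IsRegularLocal (S : Type) [CommRing S] [IsLocalRing S] : Prop :=
  IsNoetherianRing S ∧ ∃ xs : List S, RingTheory.Sequence.IsRegular S xs ∧
    Ideal.span {x | x ∈ xs} = IsLocalRing.maximalIdeal S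

/-! ### Comparison of the two definitions of Ext -/

open Abelian in
/-- The Ext groups computed from left derived functors vanish exactly when the Ext groups of
the derived category do. -/
lemma subsingleton_extM_iff (R : Type) [CommRing R] (M N : Type) [AddCommGroup M] [Module R M]
    [AddCommGroup N] [Module R N] (i : ℕ) :
    Subsingleton (ExtM R M N i) ↔
      Subsingleton (Ext (ModuleCat.of R M) (ModuleCat.of R N) i) := by
  let P : ProjectiveResolution (ModuleCat.of R M) := projectiveResolution _
  have h1 : Subsingleton (ExtM R M N i) ↔
      (P.complex.linearYonedaObj R (ModuleCat.of R N)).ExactAt i := by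
    rw [HomologicalComplex.exactAt_iff_isZero_homology, ModuleCat.isZero_iff_subsingleton]
    exact (P.isoExt (R := R) i (ModuleCat.of R N)).toLinearEquiv.toEquiv.subsingleton_congr
  rw [h1]
  match i with
  | 0 =>
    rw [HomologicalComplex.exactAt_iff' _ 0 0 1 (CochainComplex.prev_nat_zero) (by simp),
      ShortComplex.moduleCat_exact_iff]
    have hex := P.exact₀
    rw [Ext.addEquiv₀.toEquiv.subsingleton_congr]
    constructor
    · intro h
      refine ⟨fun a b => ?_⟩
      suffices H : ∀ a : ModuleCat.of R M ⟶ ModuleCat.of R N, a = 0 by rw [H a, H b]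
      intro a
      refine (cancel_epi (P.π.f 0)).1 (Eq.trans ?_ Limits.comp_zero.symm)
      have hz : P.complex.d 1 0 ≫ P.π.f 0 ≫ a = 0 :=
        (Category.assoc _ _ _).symm.trans
          ((congrArg (· ≫ a) P.complex_d_comp_π_f_zero).trans Limits.zero_comp)
      obtain ⟨x, hx⟩ := h (P.π.f 0 ≫ a) hz
      refine hx.symm.trans ?_
      let x' : P.complex.X 0 ⟶ ModuleCat.of R N := x
      have hx' : P.complex.d 0 0 ≫ x' = 0 := by
        rw [HomologicalComplex.shape _ _ _ (by simp), Limits.zero_comp]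
      exact hx'
    · intro h f hf
      refine ⟨0, ?_⟩
      rw [map_zero]
      have hf' : P.complex.d 1 0 ≫ f = 0 := hf
      have : P.π.f 0 ≫ hex.desc f hf' = f := hex.g_desc f hf'
      rw [← this]
      have h0 : hex.desc f hf' = 0 := h.elim _ _
      rw [h0]
      exact Limits.comp_zero.symm
  | (p + 1) =>
    rw [HomologicalComplex.exactAt_iff' _ p (p+1) (p+2) (by simp) (by simp),
      ShortComplex.moduleCat_exact_iff]
    constructor
    · intro h
      refine ⟨fun a b => ?_⟩
      suffices H : ∀ a : Ext (ModuleCat.of R M) (ModuleCat.of R N) (p+1), a = 0 by rw [H a, H b]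
      intro a
      obtain ⟨f, hf, rfl⟩ := P.extMk_surjective a (p + 2) rfl
      rw [P.extMk_eq_zero_iff f (p+2) rfl hf p rfl]
      obtain ⟨x, hx⟩ := h f hf
      exact ⟨x, hx⟩
    · intro h f hf
      exact (P.extMk_eq_zero_iff f (p+2) rfl hf p rfl).1 (h.elim _ _)

namespace CI

open Abelian Module

/-! ### Vanishing in long exact sequences

The lemmas `contraᵢ` concern the long exact sequence of `Ext(-, Y)`, and `cov₃` that of `Ext(X, -)`;
the index names the term `Xᵢ` of the short exact sequence whose Ext group vanishes because its two
neighbours do. -/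

section Generic

variable {C : Type*} [Category C] [Abelian C] [HasExt C]

lemma sub_of_zero {A : Type*} [AddCommGroup A] (h : ∀ a : A, a = 0) : Subsingleton A :=
  ⟨fun a b => by rw [h a, h b]⟩

variable {S : ShortComplex C} (hS : S.ShortExact)
include hS

lemma contra₂ {Y : C} {n : ℕ} (h₃ : Subsingleton (Ext S.X₃ Y n))
    (h₁ : Subsingleton (Ext S.X₁ Y n)) : Subsingleton (Ext S.X₂ Y n) := by
  refine sub_of_zero fun a => ?_
  obtain ⟨b, rfl⟩ := Ext.contravariant_sequence_exact₂ hS Y a (h₁.elim _ _)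
  rw [h₃.elim b 0, Ext.comp_zero]

lemma contra₁ {Y : C} {n : ℕ} (h₂ : Subsingleton (Ext S.X₂ Y n))
    (h₃ : Subsingleton (Ext S.X₃ Y (n + 1))) : Subsingleton (Ext S.X₁ Y n) := by
  refine sub_of_zero fun a => ?_
  obtain ⟨b, rfl⟩ := Ext.contravariant_sequence_exact₁ hS Y a (add_comm 1 n) (h₃.elim _ _)
  rw [h₂.elim b 0, Ext.comp_zero]

lemma contra₃ {Y : C} {n : ℕ} (h₁ : Subsingleton (Ext S.X₁ Y n))
    (h₂ : Subsingleton (Ext S.X₂ Y (n + 1))) : Subsingleton (Ext S.X₃ Y (n + 1)) := by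
  refine sub_of_zero fun a => ?_
  obtain ⟨b, rfl⟩ := Ext.contravariant_sequence_exact₃ hS Y a (h₂.elim _ _) (add_comm 1 n)
  rw [h₁.elim b 0, Ext.comp_zero]

lemma cov₃ {X : C} {n : ℕ} (h₂ : Subsingleton (Ext X S.X₂ n))
    (h₁ : Subsingleton (Ext X S.X₁ (n + 1))) : Subsingleton (Ext X S.X₃ n) := by
  refine sub_of_zero fun a => ?_
  obtain ⟨b, rfl⟩ := Ext.covariant_sequence_exact₃ X hS a rfl (h₁.elim _ _)
  rw [h₂.elim b 0, Ext.zero_comp]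

/-- Dimension shift along `0 → X₁ → X₂ → X₃ → 0` with `X₂` projective. -/
lemma shift [Projective S.X₂] (Y : C) (n : ℕ) :
    Subsingleton (Ext S.X₁ Y (n + 1)) ↔ Subsingleton (Ext S.X₃ Y (n + 2)) :=
  ⟨fun h => contra₃ hS h (Ext.subsingleton_of_projective _ _ _),
    fun h => contra₁ hS (Ext.subsingleton_of_projective _ _ _) h⟩

/-- `Ext¹(X₃, Y)` vanishes exactly when maps `X₁ ⟶ Y` extend to the projective `X₂`. -/
lemma ext_one_iff [Projective S.X₂] (Y : C) :
    Subsingleton (Ext S.X₃ Y 1) ↔ ∀ f : S.X₁ ⟶ Y, ∃ g : S.X₂ ⟶ Y, S.f ≫ g = f := by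
  constructor
  · intro h f
    obtain ⟨b, hb⟩ := Ext.contravariant_sequence_exact₁ hS Y (Ext.mk₀ f) (add_zero 1)
      (h.elim _ _)
    obtain ⟨g, rfl⟩ := Ext.addEquiv₀.symm.surjective b
    refine ⟨g, ?_⟩
    rw [Ext.addEquiv₀_symm_apply, Ext.mk₀_comp_mk₀] at hb
    exact Ext.addEquiv₀.symm.injective hb
  · intro h
    refine sub_of_zero fun a => ?_
    obtain ⟨b, rfl⟩ := Ext.contravariant_sequence_exact₃ hS Y a
      ((Ext.subsingleton_of_projective _ _ 0).elim _ _) (add_zero 1)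
    obtain ⟨f, rfl⟩ := Ext.addEquiv₀.symm.surjective b
    obtain ⟨g, rfl⟩ := h f
    rw [Ext.addEquiv₀_symm_apply, ← Ext.mk₀_comp_mk₀, hS.extClass_comp_assoc]

omit hS in
lemma iso_left {X X' : C} (e : X ≅ X') (Y : C) (n : ℕ) :
    Subsingleton (Ext X Y n) ↔ Subsingleton (Ext X' Y n) := by
  suffices H : ∀ {X X' : C} (e : X ≅ X'), Subsingleton (Ext X Y n) → Subsingleton (Ext X' Y n) from
    ⟨H e, H e.symm⟩
  intro X X' e h
  refine sub_of_zero fun a => ?_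
  have := h.elim ((Ext.mk₀ e.hom).comp a (zero_add n)) 0
  have h2 := congrArg (fun b => (Ext.mk₀ e.inv).comp b (zero_add n)) this
  simpa using h2

omit hS in
lemma iso_right (X : C) {Y Y' : C} (e : Y ≅ Y') (n : ℕ) :
    Subsingleton (Ext X Y n) ↔ Subsingleton (Ext X Y' n) := by
  suffices H : ∀ {Y Y' : C} (e : Y ≅ Y'), Subsingleton (Ext X Y n) → Subsingleton (Ext X Y' n) from
    ⟨H e, H e.symm⟩
  intro Y Y' e h
  refine sub_of_zero fun a => ?_
  have := h.elim (a.comp (Ext.mk₀ e.inv) (add_zero n)) 0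
  have h2 := congrArg (fun b => b.comp (Ext.mk₀ e.hom) (add_zero n)) this
  simpa using h2

end Generic

/-! ### Depth and free modules -/

section AB

variable {A : Type} [CommRing A]

/-- Vanishing of `Ext(X, F)` for a nonzero finite free `F` is vanishing of `Ext(X, A)`: `A` is a
summand of `F`, and the identity of `F` is a sum of maps that factor through `A`. -/
lemma ext_free_iff (X : ModuleCat A) (F : Type) [AddCommGroup F] [Module A F] [Module.Free A F]
    [Module.Finite A F] [Nontrivial F] (i : ℕ) :
    Subsingleton (Ext X (ModuleCat.of A F) i) ↔ Subsingleton (Ext X (ModuleCat.of A A) i) := by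
  classical
  let b := Module.Free.chooseBasis A F
  let u (j) : ModuleCat.of A F ⟶ ModuleCat.of A A := ModuleCat.ofHom (b.coord j)
  let v (j) : ModuleCat.of A A ⟶ ModuleCat.of A F :=
    ModuleCat.ofHom (LinearMap.toSpanSingleton A F (b j))
  constructor
  · intro h
    obtain ⟨j⟩ := b.index_nonempty
    have hj : v j ≫ u j = 𝟙 _ := by
      ext; simp [u, v]
    refine sub_of_zero fun a => ?_
    have h1 : (a.comp (Ext.mk₀ (v j)) (add_zero i)).comp (Ext.mk₀ (u j)) (add_zero i) = a := by
      rw [Ext.comp_assoc_of_third_deg_zero, Ext.mk₀_comp_mk₀, hj, Ext.comp_mk₀_id]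
    rw [← h1, h.elim (a.comp (Ext.mk₀ (v j)) (add_zero i)) 0, Ext.zero_comp]
  · intro h
    have hid : 𝟙 (ModuleCat.of A F) = ∑ j, u j ≫ v j := by
      ext x
      simp only [ModuleCat.hom_id, LinearMap.id_coe, id_eq, ModuleCat.hom_sum, LinearMap.sum_apply]
      exact (b.sum_repr x).symm
    refine sub_of_zero fun a => ?_
    rw [← Ext.comp_mk₀_id a, hid, Ext.mk₀_sum, Ext.comp_sum]
    refine Finset.sum_eq_zero fun j _ => ?_
    rw [← Ext.mk₀_comp_mk₀, ← Ext.comp_assoc_of_third_deg_zero,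
      h.elim (a.comp (Ext.mk₀ (u j)) (add_zero i)) 0, Ext.zero_comp]

variable [IsLocalRing A]

/-- The residue field as an object of the category of modules. -/
noncomputable abbrev kk (A : Type) [CommRing A] [IsLocalRing A] : ModuleCat A :=
  ModuleCat.of A (IsLocalRing.ResidueField A)

/-- `HasDepth X n`: the least degree in which `Ext(k, X)` is nonzero is `n`. -/
def HasDepth (X : ModuleCat A) (n : ℕ) : Prop :=
  (∀ i < n, Subsingleton (Ext (kk A) X i)) ∧ ¬ Subsingleton (Ext (kk A) X n)

lemma HasDepth.free {d : ℕ} (hd : HasDepth (ModuleCat.of A A) d)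
    (F : Type) [AddCommGroup F] [Module A F] [Module.Free A F]
    [Module.Finite A F] [Nontrivial F] : HasDepth (ModuleCat.of A F) d :=
  ⟨fun i hi => (ext_free_iff _ F i).2 (hd.1 i hi), fun h => hd.2 ((ext_free_iff _ F d).1 h)⟩

/-- The maximal ideal kills `Ext(k, -)`, so a map of finite free modules with entries in the
maximal ideal induces zero. -/
lemma comp_zero_of_mem {K : Type} [AddCommGroup K] [Module A K] [Module.Free A K]
    [Module.Finite A K] {n : ℕ} (φ : K →ₗ[A] (Fin n → A))
    (hφ : ∀ x i, φ x i ∈ IsLocalRing.maximalIdeal A) {m : ℕ}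
    (a : Ext (kk A) (ModuleCat.of A K) m) :
    a.comp (Ext.mk₀ (ModuleCat.ofHom φ)) (add_zero m) = 0 := by
  classical
  let b := Module.Free.chooseBasis A K
  let w (i : Fin n) (j) : ModuleCat.of A K ⟶ ModuleCat.of A (Fin n → A) :=
    ModuleCat.ofHom ((LinearMap.single A (fun _ : Fin n => A) i) ∘ₗ (b.coord j))
  have h : ModuleCat.ofHom φ = ∑ j, ∑ i, φ (b j) i • w i j := by
    apply ModuleCat.hom_ext
    refine b.ext fun l => ?_
    simp only [ModuleCat.hom_ofHom, ModuleCat.hom_sum, LinearMap.sum_apply, ModuleCat.hom_smul,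
      LinearMap.smul_apply, w, LinearMap.comp_apply, Basis.coord_apply, Basis.repr_self]
    rw [Finset.sum_eq_single l]
    · simp only [Finsupp.single_eq_same]
      ext i
      simp [Finset.sum_apply, Pi.single_apply]
    · intro j _ hj
      simp [hj.symm]
    · simp
  rw [h, Ext.mk₀_sum, Ext.comp_sum]
  refine Finset.sum_eq_zero fun j _ => ?_
  rw [Ext.mk₀_sum, Ext.comp_sum]
  refine Finset.sum_eq_zero fun i _ => ?_
  have hmem : φ (b j) i ∈ Module.annihilator A (kk A) := by
    rw [Module.mem_annihilator]
    intro x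
    have h0 : algebraMap A (IsLocalRing.ResidueField A) (φ (b j) i) = 0 :=
      (IsLocalRing.residue_eq_zero_iff _).2 (hφ _ _)
    change φ (b j) i • (x : IsLocalRing.ResidueField A) = 0
    rw [Algebra.smul_def, h0, zero_mul]
  have h2 := Ext.postcomp_smul_id_eq_zero_of_mem_annihilator (M := ModuleCat.of A K) hmem m
  have h3 : a.comp (Ext.mk₀ (φ (b j) i • 𝟙 (ModuleCat.of A K))) (add_zero m) = 0 :=
    congrArg (fun t => (t.hom : _ → _) a) h2
  rw [← Category.id_comp (w i j), ← Linear.smul_comp, ← Ext.mk₀_comp_mk₀,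
    ← Ext.comp_assoc_of_third_deg_zero, h3, Ext.zero_comp]

/-- A minimal free cover, obtained by lifting a basis of `M / 𝔪M`. -/
lemma exists_minimal_cover (M : Type) [AddCommGroup M] [Module A M] [Module.Finite A M] :
    ∃ (n : ℕ) (f : (Fin n → A) →ₗ[A] M), Function.Surjective f ∧
      ∀ v, f v = 0 → ∀ i, v i ∈ IsLocalRing.maximalIdeal A := by
  let k := IsLocalRing.ResidueField A
  let b := Module.finBasis k (k ⊗[A] M)
  have hs : Function.Surjective (TensorProduct.mk A k M 1) :=
    TensorProduct.mk_surjective A M k IsLocalRing.residue_surjective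
  choose g hg using fun i => hs (b i)
  refine ⟨_, Fintype.linearCombination A g, ?_, ?_⟩
  · rw [← LinearMap.range_eq_top, Fintype.range_linearCombination]
    exact IsLocalRing.span_eq_top_of_tmul_eq_basis g b hg
  · intro v hv i
    rw [← IsLocalRing.residue_eq_zero_iff]
    have h := congrArg (TensorProduct.mk A k M 1) hv
    rw [Fintype.linearCombination_apply, map_sum, map_zero] at h
    simp only [map_smul, hg] at h
    have h' : ∑ i, (IsLocalRing.residue A (v i)) • b i = 0 := by
      rw [← h]
      refine Finset.sum_congr rfl fun i _ => ?_
      exact algebraMap_smul k (v i) (b i)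
    exact (Fintype.linearIndependent_iff.1 b.linearIndependent) _ h' i

end AB

/-! ### The Auslander–Buchsbaum formula -/

section AB2

variable {A : Type} [CommRing A] [IsLocalRing A] [IsNoetherianRing A]

/-- The Auslander–Buchsbaum formula, with `q` the projective dimension and `n` the depth of `M`,
together with `Ext^q(M, N) ≠ 0` for `q ≥ 1` and every nonzero finitely generated `N`. Induction along the
syzygies in a minimal free resolution: for a free syzygy the connecting maps are controlled by
`comp_zero_of_mem` and the nonvanishing is Nakayama's lemma, for the others one shifts dimension. -/
lemma ab_aux {d : ℕ} (hd : HasDepth (ModuleCat.of A A) d) (p : ℕ) :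
    ∀ (M : Type) [AddCommGroup M] [Module A M] [Module.Finite A M] [Nontrivial M],
      HasProjectiveDimensionLT (ModuleCat.of A M) (p + 1) →
      ∃ q n, q + n = d ∧ HasProjectiveDimensionLT (ModuleCat.of A M) (q + 1) ∧
        HasDepth (ModuleCat.of A M) n ∧
        (1 ≤ q → ∀ (N : Type) [AddCommGroup N] [Module A N] [Module.Finite A N] [Nontrivial N],
          ¬ Subsingleton (Ext (ModuleCat.of A M) (ModuleCat.of A N) q)) := by
  have hfree : ∀ (M : Type) [AddCommGroup M] [Module A M] [Module.Finite A M] [Nontrivial M],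
      Projective (ModuleCat.of A M) →
      ∃ q n, q + n = d ∧ HasProjectiveDimensionLT (ModuleCat.of A M) (q + 1) ∧
        HasDepth (ModuleCat.of A M) n ∧
        (1 ≤ q → ∀ (N : Type) [AddCommGroup N] [Module A N] [Module.Finite A N] [Nontrivial N],
          ¬ Subsingleton (Ext (ModuleCat.of A M) (ModuleCat.of A N) q)) := by
    intro M _ _ _ _ hp
    have : Module.Projective A M := (IsProjective.iff_projective (R := A) M).2 hp
    have : Module.Free A M := Module.free_of_flat_of_isLocalRing
    exact ⟨0, d, zero_add d, inferInstance, hd.free M, by simp⟩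
  induction p with
  | zero =>
    intro M _ _ _ _ hp
    exact hfree M (projective_iff_hasProjectiveDimensionLT_one.2 hp)
  | succ p ih =>
    intro M _ _ _ _ hp
    obtain ⟨m, f, hf, hker⟩ := exists_minimal_cover (A := A) M
    have hS := LinearMap.shortExact_shortComplexKer hf
    have hproj : Projective (ModuleCat.of A (Fin m → A)) :=
      (IsProjective.iff_projective (R := A) _).1 inferInstance
    have hproj' : Projective (f.shortComplexKer).X₂ := hproj
    rcases subsingleton_or_nontrivial (LinearMap.ker f) with hK | hK
    · refine hfree M ?_
      have hinj : Function.Injective f := by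
        rw [← LinearMap.ker_eq_bot]
        exact (Submodule.subsingleton_iff_eq_bot).1 hK
      exact Projective.of_iso (LinearEquiv.ofBijective f ⟨hinj, hf⟩).toModuleIso hproj
    have hm : Nontrivial (Fin m → A) := (LinearMap.ker f).subtype_injective.nontrivial
    have hKp : HasProjectiveDimensionLT (ModuleCat.of A (LinearMap.ker f)) (p + 1) :=
      (hS.hasProjectiveDimensionLT_X₃_iff p hproj').1 hp
    obtain ⟨q, n, hqn, hKq, hKd, hKN⟩ := ih (LinearMap.ker f) hKp
    have hF := hd.free (Fin m → A)
    have hKfree : q = 0 → Module.Free A (LinearMap.ker f) := by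
      rintro rfl
      have : Module.Projective A (LinearMap.ker f) := (IsProjective.iff_projective (R := A) _).2
        (projective_iff_hasProjectiveDimensionLT_one.2 hKq)
      exact Module.free_of_flat_of_isLocalRing
    have hz : ∀ a : Ext (kk A) (f.shortComplexKer).X₁ n,
        a.comp (Ext.mk₀ (f.shortComplexKer).f) (add_zero n) = 0 := by
      intro a
      rcases Nat.eq_zero_or_pos q with h0 | h0
      · have := hKfree h0
        exact comp_zero_of_mem (LinearMap.ker f).subtype (fun x i => hker x.1 x.2 i) a
      · exact (hF.1 n (by omega)).elim _ _
    obtain ⟨n', rfl⟩ : ∃ n', n = n' + 1 := by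
      rcases n with - | n
      · exfalso
        apply hKd.2
        refine sub_of_zero fun a => ?_
        have : Mono (f.shortComplexKer).f := hS.mono_f
        exact Ext.postcomp_mk₀_injective_of_mono (kk A) (f.shortComplexKer).f
          (by rw [map_zero]; exact hz a)
      · exact ⟨n, rfl⟩
    refine ⟨q + 1, n', by omega, (hS.hasProjectiveDimensionLT_X₃_iff q hproj').2 hKq,
      ⟨fun i hi => cov₃ hS (hF.1 i (by omega)) (hKd.1 (i + 1) (by omega)), fun h => hKd.2 ?_⟩, ?_⟩
    · refine sub_of_zero fun a => ?_
      obtain ⟨b, rfl⟩ := Ext.covariant_sequence_exact₁ (kk A) hS a (hz a) rfl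
      have h' : b = 0 := h.elim _ _
      rw [h', Ext.zero_comp]
    · intro _ N _ _ _ _ hN
      rcases Nat.eq_zero_or_pos q with h0 | h0
      · have := hKfree h0
        subst h0
        rw [zero_add] at hN
        have hext := (ext_one_iff hS (ModuleCat.of A N)).1 hN
        let c := Module.Free.chooseBasis A (LinearMap.ker f)
        obtain ⟨j⟩ := c.index_nonempty
        -- by Nakayama, every `y : N` lies in `𝔪 N`, which forces `N = 0`
        have htop : (⊤ : Submodule A N) ≤ IsLocalRing.maximalIdeal A • (⊤ : Submodule A N) := by
          intro y _
          obtain ⟨g, hg⟩ := hext (ModuleCat.ofHom (LinearMap.toSpanSingleton A N y ∘ₗ c.coord j))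
          have hg' := congrArg (fun t => t.hom (c j)) hg
          have hy : g.hom (c j).1 = y := by
            refine Eq.trans hg' ?_
            simp
          rw [← hy]
          have hsum : ((c j).1 : Fin m → A) = ∑ i, (c j).1 i • Pi.single i (1 : A) := by
            ext l; simp [Finset.sum_apply, Pi.single_apply]
          rw [hsum, map_sum]
          refine Submodule.sum_mem _ fun i _ => ?_
          rw [map_smul]
          exact Submodule.smul_mem_smul (hker _ (c j).2 i) Submodule.mem_top
        have := Submodule.eq_bot_of_le_smul_of_le_jacobson_bot _ _ Module.Finite.fg_top htop
          (IsLocalRing.maximalIdeal_le_jacobson _)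
        exact top_ne_bot this
      · obtain ⟨q, rfl⟩ : ∃ r, q = r + 1 := ⟨q - 1, by omega⟩
        exact hKN h0 N ((shift hS (ModuleCat.of A N) q).2 hN)

end AB2

/-! ### Finite global dimension of regular local rings -/

section Bass

variable {A : Type} [CommRing A] [IsLocalRing A] [IsNoetherianRing A]

omit [IsLocalRing A] [IsNoetherianRing A] in
lemma shortExact_of_exact {N₁ N₂ N₃ : Type} [AddCommGroup N₁] [Module A N₁] [AddCommGroup N₂]
    [Module A N₂] [AddCommGroup N₃] [Module A N₃] (f : N₁ →ₗ[A] N₂) (g : N₂ →ₗ[A] N₃)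
    (hf : Function.Injective f) (hg : Function.Surjective g) (h : Function.Exact f g) :
    (ShortComplex.mk (ModuleCat.ofHom f) (ModuleCat.ofHom g)
      (by rw [← ModuleCat.ofHom_comp, h.linearMap_comp_eq_zero]; rfl)).ShortExact where
  exact := (ShortComplex.ShortExact.moduleCat_exact_iff_function_exact _).2 h
  mono_f := (ModuleCat.mono_iff_injective _).2 hf
  epi_g := (ModuleCat.epi_iff_surjective _).2 hg

/-- If `Ext^i(k, L) = 0` for all `i ≥ n`, then `Ext^i(M, L) = 0` for all `i ≥ n` and all finitely
generated `M`. By prime filtrations it suffices to treat `A ⧸ p`, by Noetherian induction on `p`: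
for `p ≠ 𝔪` choose `x ∈ 𝔪` outside `p`; the module `A ⧸ (p, x)` is filtered by larger primes, so
multiplication by `x` is surjective on `Ext^i(A ⧸ p, L)` and Nakayama's lemma applies. -/
lemma sub_ext_of_kk (n : ℕ) (L : ModuleCat A) [Module.Finite A L]
    (hk : ∀ i ≥ n, Subsingleton (Ext (kk A) L i)) (M : Type) [AddCommGroup M] [Module A M]
    [hM : Module.Finite A M] : ∀ i ≥ n, Subsingleton (Ext (ModuleCat.of A M) L i) := by
  -- an extension-closed condition known for all primes containing `I` holds for all modules
  -- killed by `I`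
  have key : ∀ I : Ideal A, (∀ p : Ideal A, p.IsPrime → I ≤ p → ∀ i ≥ n,
        Subsingleton (Ext (ModuleCat.of A (A ⧸ p)) L i)) →
      ∀ (M : Type) [AddCommGroup M] [Module A M] [Module.Finite A M],
        I ≤ Module.annihilator A M → ∀ i ≥ n, Subsingleton (Ext (ModuleCat.of A M) L i) := by
    intro I hI M _ _ hM
    refine IsNoetherianRing.induction_on_isQuotientEquivQuotientPrime A hM
      (motive := fun N _ _ _ => I ≤ Module.annihilator A N →
        ∀ i ≥ n, Subsingleton (Ext (ModuleCat.of A N) L i)) ?_ ?_ ?_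
    · intro N _ _ _ hN _ i _
      refine sub_of_zero fun a => ?_
      have h0 : 𝟙 (ModuleCat.of A N) = 0 := by
        apply ModuleCat.hom_ext; ext x; exact Subsingleton.elim _ _
      rw [← Ext.mk₀_id_comp a, h0, Ext.mk₀_zero, Ext.zero_comp]
    · intro N _ _ _ p e hN i hi
      refine (iso_left e.toModuleIso L i).2 (hI p.1 p.2 ?_ i hi)
      rwa [e.annihilator_eq, Ideal.annihilator_quotient] at hN
    · intro N₁ _ _ _ N₂ _ _ _ N₃ _ _ _ f g hf hg hfg h₁ h₃ hN i hi
      exact contra₂ (shortExact_of_exact f g hf hg hfg)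
        (h₃ (hN.trans (g.annihilator_le_of_surjective hg)) i hi)
        (h₁ (hN.trans (f.annihilator_le_of_injective hf)) i hi)
  have hprime : ∀ p : Ideal A, p.IsPrime → ∀ i ≥ n,
      Subsingleton (Ext (ModuleCat.of A (A ⧸ p)) L i) := by
    intro p
    induction p using WellFoundedGT.induction with
    | _ p ih =>
    intro hp i hi
    by_cases hpm : p = IsLocalRing.maximalIdeal A
    · subst hpm
      exact hk i hi
    obtain ⟨x, hxm, hxp⟩ := SetLike.exists_of_lt
      (lt_of_le_of_ne (IsLocalRing.le_maximalIdeal hp.ne_top) hpm)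
    have hreg : IsSMulRegular (A ⧸ p) x := by
      intro a b hab
      obtain ⟨a, rfl⟩ := Ideal.Quotient.mk_surjective a
      obtain ⟨b, rfl⟩ := Ideal.Quotient.mk_surjective b
      rw [Ideal.Quotient.eq]
      have : Ideal.Quotient.mk p (x * a) = Ideal.Quotient.mk p (x * b) := hab
      rw [Ideal.Quotient.eq, ← mul_sub] at this
      exact (hp.mem_or_mem this).resolve_left hxp
    have hS := IsSMulRegular.smulShortComplex_shortExact (M := ModuleCat.of A (A ⧸ p)) hreg
    have hq : Subsingleton (Ext (ModuleCat.of A (QuotSMulTop x (A ⧸ p))) L (i + 1)) := by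
      refine key (p ⊔ Ideal.span {x}) (fun q hq hle => ih q ?_ hq) _ ?_ (i + 1) (by omega)
      · refine lt_of_le_of_ne (le_sup_left.trans hle) ?_
        rintro rfl
        exact hxp (hle (Ideal.mem_sup_right (Ideal.mem_span_singleton_self x)))
      · refine sup_le ?_ ?_
        · refine le_trans (le_of_eq (Ideal.annihilator_quotient (I := p)).symm) ?_
          exact LinearMap.annihilator_le_of_surjective (Submodule.mkQ _)
            (Submodule.mkQ_surjective _)
        · rw [Ideal.span_singleton_le_iff_mem, Module.mem_annihilator]
          intro y
          obtain ⟨y, rfl⟩ := Submodule.mkQ_surjective _ y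
          rw [← map_smul]
          exact (Submodule.Quotient.mk_eq_zero _).2
            (Submodule.smul_mem_pointwise_smul _ _ _ Submodule.mem_top)
    have htop : (⊤ : Submodule A (Ext (ModuleCat.of A (A ⧸ p)) L i)) ≤
        IsLocalRing.maximalIdeal A • ⊤ := by
      intro a _
      obtain ⟨b, hb⟩ : ∃ b : Ext (ModuleCat.of A (A ⧸ p)) L i,
          (Ext.mk₀ (x • 𝟙 (ModuleCat.of A (A ⧸ p)))).comp b (zero_add i) = a :=
        Ext.contravariant_sequence_exact₁ hS L a (add_comm 1 i) (hq.elim _ _)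
      have hb' : x • b = a := by
        rw [← hb, Ext.mk₀_smul, Ext.smul_comp, Ext.mk₀_id_comp]
      rw [← hb']
      exact Submodule.smul_mem_smul hxm Submodule.mem_top
    have := Submodule.eq_bot_of_le_smul_of_le_jacobson_bot _ _ Module.Finite.fg_top htop
      (IsLocalRing.maximalIdeal_le_jacobson _)
    exact (Submodule.subsingleton_iff A).1 (subsingleton_of_bot_eq_top this.symm)
  exact key ⊥ (fun p hp _ => hprime p hp) M bot_le

/-- Global dimension is bounded by the projective dimension of the residue field. -/
lemma pd_le_of_kk (n : ℕ) [HasProjectiveDimensionLT (kk A) n] (M : Type) [AddCommGroup M]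
    [Module A M] [Module.Finite A M] : HasProjectiveDimensionLT (ModuleCat.of A M) n :=
  ModuleCat.hasProjectiveDimensionLT_of_forall_finite _ _ fun L _ =>
    sub_ext_of_kk n L (fun i hi => HasProjectiveDimensionLT.subsingleton _ n i hi L) M n le_rfl

/-- A regular local ring has finite global dimension, since its residue field is the quotient by
a regular sequence. -/
lemma pd_le_of_isRegularLocal (hA : IsRegularLocal A) : ∃ n, ∀ (M : Type) [AddCommGroup M]
    [Module A M] [Module.Finite A M], HasProjectiveDimensionLT (ModuleCat.of A M) n := by
  obtain ⟨-, xs, hreg, hxs⟩ := hA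
  refine ⟨xs.length + 1, fun M _ _ _ => ?_⟩
  have h := ModuleCat.projectiveDimension_quotient_eq_length.{0} xs hreg
  have h2 : HasProjectiveDimensionLT (ModuleCat.of A (Shrink.{0} (A ⧸ Ideal.ofList xs)))
      (xs.length + 1) := (projectiveDimension_le_iff _ _).1 h.le
  have e : (A ⧸ Ideal.ofList xs) ≃ₗ[A] IsLocalRing.ResidueField A :=
    Submodule.quotEquivOfEq (Ideal.ofList xs) (IsLocalRing.maximalIdeal A) hxs
  have : HasProjectiveDimensionLT (kk A) (xs.length + 1) :=
    hasProjectiveDimensionLT_of_iso ((Shrink.linearEquiv A (A ⧸ Ideal.ofList xs)).trans e).toModuleIso _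
  exact pd_le_of_kk _ M

end Bass

/-! ### Base change along `Q → Q/(x)` -/

section ChangeOfRings

variable {Q R : Type} [CommRing Q] [CommRing R] [Algebra Q R]
  (hsurj : Function.Surjective (algebraMap Q R)) {x : Q}
  (hker : RingHom.ker (algebraMap Q R) = Ideal.span {x})

section
include hsurj hker

/-- The kernel of `K → R ⊗ K` is `xK`, where `R = Q/(x)`. -/
lemma exists_smul_of_tmul_eq_zero {K : Type} [AddCommGroup K] [Module Q K] {k : K}
    (h : (1 : R) ⊗ₜ[Q] k = 0) : ∃ k', k = x • k' := by
  have hs : Function.Surjective (Algebra.ofId Q R) := hsurj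
  let e := Ideal.quotientKerAlgEquivOfSurjective hs
  have h2 := congrArg (TensorProduct.congr e.toLinearEquiv.symm (LinearEquiv.refl Q K)) h
  rw [TensorProduct.congr_tmul, map_zero] at h2
  have h3 : e.toLinearEquiv.symm 1 = 1 := map_one e.symm
  rw [h3] at h2
  have h4 : k ∈ LinearMap.ker (TensorProduct.mk Q (Q ⧸ RingHom.ker (Algebra.ofId Q R)) K 1) := h2
  have h5 : RingHom.ker (Algebra.ofId Q R) = Ideal.span {x} := hker
  rw [LinearMap.ker_tensorProductMk, h5, Submodule.ideal_span_singleton_smul,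
    Submodule.mem_smul_pointwise_iff_exists] at h4
  obtain ⟨b, -, hb⟩ := h4
  exact ⟨b, hb.symm⟩

omit hsurj in
lemma one_tmul_smul {K : Type} [AddCommGroup K] [Module Q K] (k : K) :
    (1 : R) ⊗ₜ[Q] (x • k) = 0 := by
  have hx : algebraMap Q R x = 0 := by
    rw [← RingHom.mem_ker, hker]; exact Ideal.mem_span_singleton_self x
  rw [← TensorProduct.smul_tmul, Algebra.smul_def, hx, zero_mul, TensorProduct.zero_tmul]

/-- Reduction modulo `x` keeps `0 → K₁ → K₂ → K₃ → 0` exact on the left when `x` is regular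
on `K₃`. -/
lemma baseChange_injective {K₁ K₂ K₃ : Type} [AddCommGroup K₁] [Module Q K₁] [AddCommGroup K₂]
    [Module Q K₂] [AddCommGroup K₃] [Module Q K₃] (f : K₁ →ₗ[Q] K₂) (g : K₂ →ₗ[Q] K₃)
    (hf : Function.Injective f) (h : Function.Exact f g) (hreg : IsSMulRegular K₃ x) :
    Function.Injective (f.baseChange R) := by
  rw [injective_iff_map_eq_zero]
  intro z hz
  obtain ⟨k, rfl⟩ := TensorProduct.mk_surjective Q K₁ R hsurj z
  rw [TensorProduct.mk_apply, LinearMap.baseChange_tmul] at hz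
  obtain ⟨m, hm⟩ := exists_smul_of_tmul_eq_zero hsurj hker hz
  have hgm : g m = 0 := by
    apply hreg
    change x • g m = x • 0
    rw [← map_smul, ← hm, h.apply_apply_eq_zero, smul_zero]
  obtain ⟨k', rfl⟩ := (h m).1 hgm
  rw [← map_smul] at hm
  rw [TensorProduct.mk_apply, hf hm, one_tmul_smul hker]

omit hsurj hker in
lemma baseChange_surjective {K₂ K₃ : Type} [AddCommGroup K₂]
    [Module Q K₂] [AddCommGroup K₃] [Module Q K₃] (g : K₂ →ₗ[Q] K₃)
    (hg : Function.Surjective g) : Function.Surjective (g.baseChange R) :=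
  LinearMap.lTensor_surjective R hg

omit hsurj hker in
lemma baseChange_exact {K₁ K₂ K₃ : Type} [AddCommGroup K₁] [Module Q K₁] [AddCommGroup K₂]
    [Module Q K₂] [AddCommGroup K₃] [Module Q K₃] (f : K₁ →ₗ[Q] K₂) (g : K₂ →ₗ[Q] K₃)
    (hg : Function.Surjective g) (h : Function.Exact f g) :
    Function.Exact (f.baseChange R) (g.baseChange R) :=
  lTensor_exact R h hg

end

lemma isSMulRegular_finsupp (hx : IsSMulRegular Q x) (ι : Type) : IsSMulRegular (ι →₀ Q) x := by
  intro a b hab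
  ext i
  exact hx (DFunLike.congr_fun hab i)

variable (N : Type) [AddCommGroup N] [Module R N] [Module Q N] [IsScalarTower Q R N]

lemma exists_presentation (K : Type) [AddCommGroup K] [Module Q K] :
    ∃ (ι : Type) (K' : Type) (_ : AddCommGroup K') (_ : Module Q K')
      (j : K' →ₗ[Q] (ι →₀ Q)) (p : (ι →₀ Q) →ₗ[Q] K),
      Function.Injective j ∧ Function.Surjective p ∧ Function.Exact j p := by
  let p : (K →₀ Q) →ₗ[Q] K := Finsupp.linearCombination Q id
  exact ⟨K, LinearMap.ker p, inferInstance, inferInstance, (LinearMap.ker p).subtype, p,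
    Subtype.val_injective, Finsupp.linearCombination_id_surjective Q K, p.exact_subtype_ker_map⟩

section
include hsurj hker

variable {K F K' : Type} [AddCommGroup K] [Module Q K] [AddCommGroup F] [Module Q F]
  [AddCommGroup K'] [Module Q K'] (j : K' →ₗ[Q] F) (p : F →ₗ[Q] K)
  (hj : Function.Injective j) (hp : Function.Surjective p) (hjp : Function.Exact j p)
  (hK : IsSMulRegular K x)
include hj hp hjp hK

variable [Module.Projective Q F]

lemma ext_baseChange_one :
    Subsingleton (Ext (ModuleCat.of R (R ⊗[Q] K)) (ModuleCat.of R N) 1) ↔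
      Subsingleton (Ext (ModuleCat.of Q K) (ModuleCat.of Q N) 1) := by
  have hQ := shortExact_of_exact j p hj hp hjp
  have hR := shortExact_of_exact (j.baseChange R) (p.baseChange R)
    (baseChange_injective hsurj hker j p hj hjp hK) (baseChange_surjective p hp)
    (baseChange_exact j p hp hjp)
  have : Projective (ModuleCat.of Q F) :=
    (IsProjective.iff_projective (R := Q) _).1 inferInstance
  have : Projective (ModuleCat.of R (R ⊗[Q] F)) :=
    (IsProjective.iff_projective (R := R) _).1 inferInstance
  refine (ext_one_iff hR (ModuleCat.of R N)).trans
    (Iff.trans ?_ (ext_one_iff hQ (ModuleCat.of Q N)).symm)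
  constructor
  · intro h f
    obtain ⟨g, hg⟩ := h (ModuleCat.ofHom (LinearMap.liftBaseChange R f.hom))
    refine ⟨ModuleCat.ofHom ((g.hom.restrictScalars Q) ∘ₗ TensorProduct.mk Q R F 1), ?_⟩
    apply ModuleCat.hom_ext
    refine LinearMap.ext fun k => ?_
    have h1 := congrArg (fun t => t.hom ((1 : R) ⊗ₜ[Q] k)) hg
    have h2 : g.hom ((1 : R) ⊗ₜ[Q] j k) = (1 : R) • f.hom k := h1
    rw [one_smul] at h2
    exact h2
  · intro h f
    obtain ⟨g, hg⟩ := h (ModuleCat.ofHom ((f.hom.restrictScalars Q) ∘ₗ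
      TensorProduct.mk Q R K' 1))
    refine ⟨ModuleCat.ofHom (LinearMap.liftBaseChange R g.hom), ?_⟩
    apply ModuleCat.hom_ext
    refine LinearMap.ext fun z => ?_
    obtain ⟨k, rfl⟩ := TensorProduct.mk_surjective Q K' R hsurj z
    have h1 : g.hom (j k) = f.hom ((1 : R) ⊗ₜ[Q] k) := congrArg (fun t => t.hom k) hg
    change (1 : R) • g.hom (j k) = f.hom ((1 : R) ⊗ₜ[Q] k)
    rw [one_smul, h1]

omit [IsScalarTower Q R N] in
lemma ext_baseChange_succ (n : ℕ)
    (ih : Subsingleton (Ext (ModuleCat.of R (R ⊗[Q] K')) (ModuleCat.of R N) (n + 1)) ↔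
      Subsingleton (Ext (ModuleCat.of Q K') (ModuleCat.of Q N) (n + 1))) :
    Subsingleton (Ext (ModuleCat.of R (R ⊗[Q] K)) (ModuleCat.of R N) (n + 2)) ↔
      Subsingleton (Ext (ModuleCat.of Q K) (ModuleCat.of Q N) (n + 2)) := by
  have hQ := shortExact_of_exact j p hj hp hjp
  have hR := shortExact_of_exact (j.baseChange R) (p.baseChange R)
    (baseChange_injective hsurj hker j p hj hjp hK) (baseChange_surjective p hp)
    (baseChange_exact j p hp hjp)
  have : Projective (ModuleCat.of Q F) :=
    (IsProjective.iff_projective (R := Q) _).1 inferInstance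
  have : Projective (ModuleCat.of R (R ⊗[Q] F)) :=
    (IsProjective.iff_projective (R := R) _).1 inferInstance
  exact (shift hR (ModuleCat.of R N) n).symm.trans (Iff.trans ih (shift hQ (ModuleCat.of Q N) n))

end

include hsurj hker in
/-- `Ext_R(K/xK, N) = Ext_Q(K, N)` in positive degrees when `x` is regular on `K` and kills
`N`; stated for vanishing only. -/
lemma ext_baseChange_iff (hx : IsSMulRegular Q x) (n : ℕ) :
    ∀ (K : Type) [AddCommGroup K] [Module Q K], IsSMulRegular K x →
    (Subsingleton (Ext (ModuleCat.of R (R ⊗[Q] K)) (ModuleCat.of R N) (n + 1)) ↔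
      Subsingleton (Ext (ModuleCat.of Q K) (ModuleCat.of Q N) (n + 1))) := by
  induction n with
  | zero =>
    intro K _ _ hK
    obtain ⟨ι, K', _, _, j, p, hj, hp, hjp⟩ := exists_presentation (Q := Q) K
    exact ext_baseChange_one hsurj hker N j p hj hp hjp hK
  | succ n ih =>
    intro K _ _ hK
    obtain ⟨ι, K', _, _, j, p, hj, hp, hjp⟩ := exists_presentation (Q := Q) K
    refine ext_baseChange_succ hsurj hker N j p hj hp hjp hK n (ih K' fun a b hab => ?_)
    refine hj (isSMulRegular_finsupp hx ι ?_)
    change x • j a = x • j b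
    rw [← map_smul, ← map_smul]
    exact congrArg j hab

end ChangeOfRings

/-! ### Change of rings for Ext -/

section ChangeOfRings

variable {Q R : Type} [CommRing Q] [CommRing R] [Algebra Q R]
  (hsurj : Function.Surjective (algebraMap Q R)) {x : Q}
  (hker : RingHom.ker (algebraMap Q R) = Ideal.span {x})

section
include hsurj hker

/-- `Tor₁(R, M) = M` for `R = Q/x` and an `R`-module `M`: a presentation `0 → K → F → M → 0`
over `Q` gives an exact sequence `0 → M → R ⊗ K → R ⊗ F`, where `M → R ⊗ K` sends the image of
`v` to the class of `x • v`. -/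
lemma exists_tor_map {K F M : Type} [AddCommGroup K] [Module Q K] [AddCommGroup F] [Module Q F]
    [AddCommGroup M] [Module R M] [Module Q M] [IsScalarTower Q R M]
    (j : K →ₗ[Q] F) (p : F →ₗ[Q] M) (hj : Function.Injective j) (hp : Function.Surjective p)
    (hjp : Function.Exact j p) (hF : IsSMulRegular F x) :
    ∃ θ : M →ₗ[R] R ⊗[Q] K, Function.Injective θ ∧ Function.Exact θ (j.baseChange R) := by
  have hxM (m : M) : x • m = 0 := by
    have hx : algebraMap Q R x = 0 := by
      rw [← RingHom.mem_ker, hker]; exact Ideal.mem_span_singleton_self x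
    rw [← algebraMap_smul R x m, hx, zero_smul]
  have hφ (v : F) : ∃ k, j k = x • v := (hjp _).1 (by rw [map_smul, hxM])
  choose φ hφ using hφ
  let φl : F →ₗ[Q] K :=
    { toFun := φ
      map_add' := fun a b => hj (by rw [map_add, hφ, hφ, hφ, smul_add])
      map_smul' := fun c a => hj (by
        rw [map_smul, hφ, hφ, RingHom.id_apply, smul_comm]) }
  let θ' : F →ₗ[Q] R ⊗[Q] K := TensorProduct.mk Q R K 1 ∘ₗ φl
  have hθ' (v : F) : θ' v = 1 ⊗ₜ φ v := rfl
  have hle : LinearMap.ker p ≤ LinearMap.ker θ' := by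
    intro v hv
    obtain ⟨k, rfl⟩ := (hjp v).1 hv
    have h1 : φ (j k) = x • k := hj (by rw [hφ, map_smul])
    rw [LinearMap.mem_ker, hθ', h1, one_tmul_smul hker]
  let θ₀ : M →ₗ[Q] R ⊗[Q] K :=
    (LinearMap.ker p).liftQ θ' hle ∘ₗ (p.quotKerEquivOfSurjective hp).symm.toLinearMap
  have hθ₀ (v : F) : θ₀ (p v) = 1 ⊗ₜ φ v := by
    have : (p.quotKerEquivOfSurjective hp).symm (p v) = Submodule.Quotient.mk v := by
      rw [LinearEquiv.symm_apply_eq]; rfl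
    change (LinearMap.ker p).liftQ θ' hle ((p.quotKerEquivOfSurjective hp).symm (p v)) = _
    rw [this]; rfl
  refine ⟨θ₀.extendScalarsOfSurjective hsurj, ?_, ?_⟩
  · rw [injective_iff_map_eq_zero]
    intro m hm
    obtain ⟨v, rfl⟩ := hp m
    have hm' : θ₀ (p v) = 0 := hm
    rw [hθ₀] at hm'
    obtain ⟨k, hk⟩ := exists_smul_of_tmul_eq_zero hsurj hker hm'
    refine (hjp v).2 ⟨k, hF ?_⟩
    change x • j k = x • v
    rw [← map_smul, ← hk, hφ]
  · intro z
    constructor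
    · intro hz
      obtain ⟨k, rfl⟩ := TensorProduct.mk_surjective Q K R hsurj z
      rw [TensorProduct.mk_apply, LinearMap.baseChange_tmul] at hz
      obtain ⟨v, hv⟩ := exists_smul_of_tmul_eq_zero hsurj hker hz
      refine ⟨p v, ?_⟩
      change θ₀ (p v) = _
      rw [hθ₀, TensorProduct.mk_apply]
      congr 1
      exact hj (by rw [hφ, hv])
    · rintro ⟨m, rfl⟩
      obtain ⟨v, rfl⟩ := hp m
      change j.baseChange R (θ₀ (p v)) = 0
      rw [hθ₀, LinearMap.baseChange_tmul, hφ, one_tmul_smul hker]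

variable (hx : IsSMulRegular Q x)
  (M N : Type) [AddCommGroup M] [Module R M] [Module Q M] [IsScalarTower Q R M]
  [AddCommGroup N] [Module R N] [Module Q N] [IsScalarTower Q R N]

include hx in
/-- The exact sequence `0 → M → R ⊗ K → L → 0` together with dimension shifting: `L` is a first
syzygy of `M` over `R` and `K` one over `Q`. -/
lemma exists_change_of_rings :
    ∃ S : ShortComplex (ModuleCat R), S.ShortExact ∧ S.X₁ = ModuleCat.of R M ∧
      (∀ n, Subsingleton (Ext S.X₂ (ModuleCat.of R N) (n + 1)) ↔
        Subsingleton (Ext (ModuleCat.of Q M) (ModuleCat.of Q N) (n + 2))) ∧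
      (∀ n, Subsingleton (Ext S.X₃ (ModuleCat.of R N) (n + 1)) ↔
        Subsingleton (Ext (ModuleCat.of R M) (ModuleCat.of R N) (n + 2))) := by
  obtain ⟨ι, K, _, _, j, p, hj, hp, hjp⟩ := exists_presentation (Q := Q) M
  have hF := isSMulRegular_finsupp hx ι
  have hK : IsSMulRegular K x := by
    intro a b hab
    refine hj (hF ?_)
    change x • j a = x • j b
    rw [← map_smul, ← map_smul]
    exact congrArg j hab
  obtain ⟨θ, hθ, hθj⟩ := exists_tor_map hsurj hker j p hj hp hjp hF
  have hr : Function.Surjective (p.liftBaseChange R) := by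
    intro m
    obtain ⟨v, rfl⟩ := hp m
    exact ⟨1 ⊗ₜ v, by rw [LinearMap.liftBaseChange_tmul, one_smul]⟩
  have hrj (z : R ⊗[Q] K) : j.baseChange R z ∈ LinearMap.ker (p.liftBaseChange R) := by
    obtain ⟨k, rfl⟩ := TensorProduct.mk_surjective Q K R hsurj z
    rw [TensorProduct.mk_apply, LinearMap.baseChange_tmul, LinearMap.mem_ker,
      LinearMap.liftBaseChange_tmul, hjp.apply_apply_eq_zero, smul_zero]
  have hc : Function.Surjective ((j.baseChange R).codRestrict _ hrj) := by
    rintro ⟨z, hz⟩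
    obtain ⟨v, rfl⟩ := TensorProduct.mk_surjective Q (ι →₀ Q) R hsurj z
    rw [LinearMap.mem_ker, TensorProduct.mk_apply, LinearMap.liftBaseChange_tmul, one_smul] at hz
    obtain ⟨k, rfl⟩ := (hjp v).1 hz
    exact ⟨1 ⊗ₜ k, Subtype.ext (LinearMap.baseChange_tmul _ _ _)⟩
  have hex : Function.Exact θ ((j.baseChange R).codRestrict _ hrj) := by
    intro z
    rw [← hθj z, Subtype.ext_iff]
    rfl
  obtain ⟨L, _, _, c, l, hc, hl, hlr, hθc⟩ : ∃ (L : Type) (_ : AddCommGroup L) (_ : Module R L)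
      (c : R ⊗[Q] K →ₗ[R] L) (l : L →ₗ[R] R ⊗[Q] (ι →₀ Q)), Function.Surjective c ∧
        Function.Injective l ∧ Function.Exact l (p.liftBaseChange R) ∧ Function.Exact θ c :=
    ⟨LinearMap.ker (p.liftBaseChange R), inferInstance, inferInstance, _, Submodule.subtype _, hc,
      Subtype.val_injective, LinearMap.exact_subtype_ker_map _, hex⟩
  have h2 := shortExact_of_exact θ c hθ hc hθc
  have h1 := shortExact_of_exact l (p.liftBaseChange R) hl hr hlr
  have : Projective (ModuleCat.of Q (ι →₀ Q)) :=
    (IsProjective.iff_projective (R := Q) _).1 inferInstance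
  have : Projective (ModuleCat.of R (R ⊗[Q] (ι →₀ Q))) :=
    (IsProjective.iff_projective (R := R) _).1 inferInstance
  have hQ := shortExact_of_exact j p hj hp hjp
  refine ⟨_, h2, rfl, fun n => ?_, fun n => ?_⟩
  · exact (ext_baseChange_iff hsurj hker N hx n K hK).trans (shift hQ (ModuleCat.of Q N) n)
  · exact shift h1 (ModuleCat.of R N) n

end

/-- The Ext-vanishing pattern of the pair `(M, N)` over `A` in positive degrees: if
`Ext^i(M, N)` vanishes for large `i`, then it vanishes for `i > p - c` and does not vanish for
`i = p - c` (the subtraction is written as an addition to avoid truncation). -/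
def ExtPattern (A M N : Type) [CommRing A] [AddCommGroup M] [Module A M] [AddCommGroup N]
    [Module A N] (p c : ℕ) : Prop :=
  (∃ i₀, ∀ i ≥ i₀, Subsingleton (Ext (ModuleCat.of A M) (ModuleCat.of A N) i)) →
    (∀ i, 1 ≤ i → p < i + c → Subsingleton (Ext (ModuleCat.of A M) (ModuleCat.of A N) i)) ∧
    (∀ i, 1 ≤ i → i + c = p → ¬ Subsingleton (Ext (ModuleCat.of A M) (ModuleCat.of A N) i))

include hsurj hker in
/-- Passing to the quotient by a regular element lowers the top nonvanishing degree by one. -/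
lemma ExtPattern.quotient (hx : IsSMulRegular Q x)
    (M N : Type) [AddCommGroup M] [Module R M] [Module Q M] [IsScalarTower Q R M]
    [AddCommGroup N] [Module R N] [Module Q N] [IsScalarTower Q R N] {p c : ℕ}
    (h : ExtPattern Q M N p c) : ExtPattern R M N p (c + 1) := by
  obtain ⟨S, hS, h₁, h₂, h₃⟩ := exists_change_of_rings hsurj hker hx M N
  have up (i : ℕ) (a : Subsingleton (Ext (ModuleCat.of R M) (ModuleCat.of R N) (i + 1)))
      (b : Subsingleton (Ext (ModuleCat.of R M) (ModuleCat.of R N) (i + 2))) :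
      Subsingleton (Ext (ModuleCat.of Q M) (ModuleCat.of Q N) (i + 2)) := by
    rw [← h₁] at a
    exact (h₂ i).1 (contra₂ hS ((h₃ i).2 b) a)
  have down (i : ℕ) (a : Subsingleton (Ext (ModuleCat.of Q M) (ModuleCat.of Q N) (i + 2)))
      (b : Subsingleton (Ext (ModuleCat.of R M) (ModuleCat.of R N) (i + 3))) :
      Subsingleton (Ext (ModuleCat.of R M) (ModuleCat.of R N) (i + 1)) := by
    rw [← h₁]
    exact contra₁ hS ((h₂ i).2 a) ((h₃ (i + 1)).2 b)
  rintro ⟨i₀, hi₀⟩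
  obtain ⟨v, nv⟩ := h ⟨i₀ + 2, fun i hi => by
    obtain ⟨k, rfl⟩ := Nat.exists_eq_add_of_le' (show 2 ≤ i by omega)
    exact up k (hi₀ _ (by omega)) (hi₀ _ (by omega))⟩
  have key : ∀ n i, i₀ ≤ i + n → p < i + 1 + (c + 1) →
      Subsingleton (Ext (ModuleCat.of R M) (ModuleCat.of R N) (i + 1)) := by
    intro n
    induction n with
    | zero => exact fun i hi _ => hi₀ _ (by omega)
    | succ n ih =>
      intro i hi hp
      exact down i (v (i + 2) (by omega) (by omega)) (ih (i + 2) (by omega) (by omega))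
  refine ⟨fun i hi hp => ?_, fun i hi hp hsub => ?_⟩
  · obtain ⟨k, rfl⟩ := Nat.exists_eq_add_of_le' hi
    exact key i₀ k (by omega) hp
  · obtain ⟨k, rfl⟩ := Nat.exists_eq_add_of_le' hi
    exact nv (k + 2) (by omega) (by omega) (up k hsub (key i₀ (k + 1) (by omega) (by omega)))

end ChangeOfRings

/-! ### Induction along the regular sequence -/

open Pointwise

section CompleteIntersection

/-- Ext is unchanged under an isomorphism of rings. -/
lemma ext_iff_of_bijective {Q R : Type} [CommRing Q] [CommRing R] [Algebra Q R]
    (hbij : Function.Bijective (algebraMap Q R))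
    (M N : Type) [AddCommGroup M] [Module R M] [Module Q M] [IsScalarTower Q R M]
    [AddCommGroup N] [Module R N] [Module Q N] [IsScalarTower Q R N] (n : ℕ) :
    Subsingleton (Ext (ModuleCat.of R M) (ModuleCat.of R N) n) ↔
      Subsingleton (Ext (ModuleCat.of Q M) (ModuleCat.of Q N) n) := by
  let e : Q ≃+* R := RingEquiv.ofBijective _ hbij
  let F := ModuleCat.restrictScalars e.toRingHom
  let iso (L : Type) [AddCommGroup L] [Module R L] [Module Q L] [IsScalarTower Q R L] :
      F.obj (ModuleCat.of R L) ≅ ModuleCat.of Q L :=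
    let E : F.obj (ModuleCat.of R L) ≃ₗ[Q] L :=
      { AddEquiv.refl L with
        map_smul' := fun q m => algebraMap_smul R q (show L from m) }
    E.toModuleIso
  have h := F.mapExt_bijective_of_preservesProjectiveObjects (ModuleCat.of R M)
    (ModuleCat.of R N) n
  exact (Equiv.ofBijective _ h).subsingleton_congr.trans
    ((iso_left (iso M) _ n).trans (iso_right _ (iso N) n))

/-- For a complete intersection `R = Q/(x₁, …, x_c)` the top nonvanishing degree of
`Ext(M, N)` drops by `c` when passing from `Q` to `R`. -/
lemma ExtPattern.list {R : Type} [CommRing R] (M N : Type) [AddCommGroup M] [Module R M]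
    [AddCommGroup N] [Module R N] {p : ℕ} (n : ℕ) :
    ∀ (Q : Type) [CommRing Q] [Algebra Q R] [Module Q M] [IsScalarTower Q R M] [Module Q N]
      [IsScalarTower Q R N] (xs : List Q) (c : ℕ), xs.length = n →
      Function.Surjective (algebraMap Q R) → RingHom.ker (algebraMap Q R) = Ideal.ofList xs →
      RingTheory.Sequence.IsWeaklyRegular Q xs → ExtPattern Q M N p c →
      ExtPattern R M N p (c + n) := by
  induction n with
  | zero =>
    intro Q _ _ _ _ _ _ xs c hlen hsurj hker _ h
    rw [List.length_eq_zero_iff] at hlen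
    subst hlen
    rw [Ideal.ofList_nil] at hker
    have hbij : Function.Bijective (algebraMap Q R) :=
      ⟨(RingHom.injective_iff_ker_eq_bot _).2 hker, hsurj⟩
    simpa only [ExtPattern, ext_iff_of_bijective hbij M N, add_zero] using h
  | succ n ih =>
    intro Q _ _ _ _ _ _ xs c hlen hsurj hker hreg h
    obtain _ | ⟨x, xs⟩ := xs
    · simp at hlen
    rw [RingTheory.Sequence.isWeaklyRegular_cons_iff] at hreg
    obtain ⟨hx, hxs⟩ := hreg
    have hspan : x • (⊤ : Submodule Q Q) = Ideal.span {x} := by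
      rw [← Submodule.ideal_span_singleton_smul, smul_eq_mul, Ideal.mul_top]
    let Q' := Q ⧸ Ideal.span {x}
    have hx0 : ∀ a ∈ Ideal.span {x}, algebraMap Q R a = 0 := fun a ha => by
      rw [← RingHom.mem_ker, hker, Ideal.ofList_cons]
      exact Ideal.mem_sup_left ha
    let φ : Q' →+* R := Ideal.Quotient.lift (Ideal.span {x}) (algebraMap Q R) hx0
    let : Algebra Q' R := φ.toAlgebra
    let : Module Q' M := Module.compHom M φ
    let : Module Q' N := Module.compHom N φ
    have : IsScalarTower Q' R M := ⟨fun a b m => by rw [Algebra.smul_def, mul_smul]; rfl⟩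
    have : IsScalarTower Q' R N := ⟨fun a b m => by rw [Algebra.smul_def, mul_smul]; rfl⟩
    have : IsScalarTower Q Q' M := IsScalarTower.of_algebraMap_smul fun a m =>
      algebraMap_smul R a m
    have : IsScalarTower Q Q' N := IsScalarTower.of_algebraMap_smul fun a m =>
      algebraMap_smul R a m
    have hker' : RingHom.ker (algebraMap Q' R) = Ideal.ofList (xs.map (algebraMap Q Q')) := by
      change RingHom.ker φ = _
      refine (Ideal.ker_quotient_lift (algebraMap Q R) hx0).trans ?_
      rw [hker, Ideal.ofList_cons, Ideal.map_sup, Ideal.map_ofList]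
      rw [Ideal.map_quotient_self, bot_sup_eq]
      rfl
    have hreg' : RingTheory.Sequence.IsWeaklyRegular Q' (xs.map (algebraMap Q Q')) := by
      rw [RingTheory.Sequence.isWeaklyRegular_map_algebraMap_iff]
      exact ((Submodule.quotEquivOfEq _ _ hspan).isWeaklyRegular_congr xs).1 hxs
    have hs : Function.Surjective (algebraMap Q Q') := Ideal.Quotient.mk_surjective
    have hk : RingHom.ker (algebraMap Q Q') = Ideal.span {x} := Ideal.mk_ker
    have hQ' : ExtPattern Q' M N p (c + 1) := ExtPattern.quotient hs hk hx M N h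
    rw [← add_assoc, add_right_comm]
    exact ih Q' (xs.map (algebraMap Q Q')) (c + 1) (by simpa using hlen)
      (Ideal.Quotient.lift_surjective_of_surjective _ hx0 hsurj) hker' hreg' hQ'

end CompleteIntersection

/-! ### Depth along surjections of local rings -/

section Depth

lemma hasDepth_iff {A : Type} [CommRing A] [IsLocalRing A] (X : ModuleCat A) (n : ℕ) :
    HasDepth X n ↔ (∀ i < n, Subsingleton (Ext (kk A) X i)) ∧
      ¬ ∀ i < n + 1, Subsingleton (Ext (kk A) X i) := by
  refine and_congr_right fun h => not_congr ⟨fun hn i hi => ?_, fun h => h n (by omega)⟩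
  obtain hi | rfl := Nat.lt_succ_iff_lt_or_eq.1 hi
  · exact h i hi
  · exact hn

lemma HasDepth.depthM_eq {A : Type} [CommRing A] [IsLocalRing A] {M : Type} [AddCommGroup M]
    [Module A M] {n : ℕ} (h : HasDepth (ModuleCat.of A M) n) : depthM A M = n := by
  refine IsLeast.csInf_eq ⟨⟨n, rfl, fun h' => h.2 ((subsingleton_extM_iff _ _ _ _).1 h')⟩, ?_⟩
  rintro _ ⟨m, rfl, hm⟩
  by_contra! hlt
  exact hm ((subsingleton_extM_iff _ _ _ _).2 (h.1 m (by exact_mod_cast hlt)))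

/-- Rees' theorem: `Ext^i(k, M)` vanishes for `i < n` exactly when the maximal ideal contains an
`M`-regular sequence of length `n`. -/
lemma ext_kk_iff_exists_regular {A : Type} [CommRing A] [IsLocalRing A] [IsNoetherianRing A]
    (M : Type) [AddCommGroup M] [Module A M] [hM : Module.Finite A M] [Nontrivial M] (n : ℕ) :
    (∀ i < n, Subsingleton (Ext (kk A) (ModuleCat.of A M) i)) ↔
      ∃ rs : List A, rs.length = n ∧ (∀ r ∈ rs, r ∈ IsLocalRing.maximalIdeal A) ∧
        RingTheory.Sequence.IsWeaklyRegular M rs := by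
  have hlt : IsLocalRing.maximalIdeal A • (⊤ : Submodule A M) < ⊤ :=
    lt_top_iff_ne_top.2 (Submodule.top_ne_ideal_smul_of_le_jacobson_annihilator
      (IsLocalRing.maximalIdeal_le_jacobson _)).symm
  have hann : Module.annihilator A (IsLocalRing.ResidueField A) = IsLocalRing.maximalIdeal A :=
    Ideal.annihilator_quotient
  have hsupp : Module.support A (IsLocalRing.ResidueField A) =
      PrimeSpectrum.zeroLocus (IsLocalRing.maximalIdeal A : Set A) := by
    rw [Module.support_eq_zeroLocus, hann]
  have : Module.Finite A (kk A) := inferInstanceAs (Module.Finite A (IsLocalRing.ResidueField A))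
  have : Module.Finite A (ModuleCat.of A M) := hM
  constructor
  · intro h
    obtain ⟨rs, hlen, hmem, hreg⟩ := ModuleCat.exists_isRegular_of_exists_subsingleton_ext
      (IsLocalRing.maximalIdeal A) n (ModuleCat.of A M) hlt (kk A) hsupp h
    exact ⟨rs, hlen, hmem, hreg.toIsWeaklyRegular⟩
  · rintro ⟨rs, rfl, hmem, hreg⟩
    exact ModuleCat.subsingleton_ext_of_exists_isRegular (IsLocalRing.maximalIdeal A) (kk A)
      hsupp.le (ModuleCat.of A M) hlt rs hmem
      (RingTheory.Sequence.IsRegular.of_isWeaklyRegular_of_mem_maximalIdeal M hmem hreg)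

/-- Depth does not change along a surjection of local rings. -/
lemma hasDepth_iff_of_surjective {A B : Type} [CommRing A] [IsLocalRing A] [IsNoetherianRing A]
    [CommRing B] [IsLocalRing B] [IsNoetherianRing B] [Algebra A B]
    (hsurj : Function.Surjective (algebraMap A B)) (M : Type) [AddCommGroup M] [Module B M]
    [Module A M] [IsScalarTower A B M] [Module.Finite B M] [Module.Finite A M] [Nontrivial M]
    (n : ℕ) : HasDepth (ModuleCat.of B M) n ↔ HasDepth (ModuleCat.of A M) n := by
  have : IsLocalHom (algebraMap A B) := hsurj.isLocalHom
  have key (n : ℕ) : (∀ i < n, Subsingleton (Ext (kk B) (ModuleCat.of B M) i)) ↔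
      ∀ i < n, Subsingleton (Ext (kk A) (ModuleCat.of A M) i) := by
    rw [ext_kk_iff_exists_regular, ext_kk_iff_exists_regular]
    constructor
    · rintro ⟨rs, hlen, hmem, hreg⟩
      obtain ⟨rs, rfl⟩ := hsurj.list_map rs
      rw [RingTheory.Sequence.isWeaklyRegular_map_algebraMap_iff] at hreg
      refine ⟨rs, by simpa using hlen, fun r hr => ?_, hreg⟩
      have := hmem _ (List.mem_map_of_mem hr)
      rw [IsLocalRing.mem_maximalIdeal] at this ⊢
      exact fun hu => this (hu.map _)
    · rintro ⟨rs, hlen, hmem, hreg⟩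
      refine ⟨rs.map (algebraMap A B), by simpa using hlen, fun r hr => ?_,
        (RingTheory.Sequence.isWeaklyRegular_map_algebraMap_iff B M rs).2 hreg⟩
      obtain ⟨a, ha, rfl⟩ := List.mem_map.1 hr
      exact (IsLocalRing.mem_maximalIdeal _).2
        ((map_mem_nonunits_iff (algebraMap A B) a).2 (hmem a ha))
  rw [hasDepth_iff, hasDepth_iff, key, key]

/-- Were all `Ext^i(k, A)` zero, there would be regular sequences longer than the finite Krull
dimension of `A`. -/
lemma exists_hasDepth_self (A : Type) [CommRing A] [IsLocalRing A] [IsNoetherianRing A] :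
    ∃ d, HasDepth (ModuleCat.of A A) d := by
  classical
  by_cases h : ∃ d, ¬ Subsingleton (Ext (kk A) (ModuleCat.of A A) d)
  · exact ⟨Nat.find h, fun i hi => not_not.1 (Nat.find_min h hi), Nat.find_spec h⟩
  · push Not at h
    exfalso
    obtain ⟨m, hm⟩ : ∃ m : ℕ, ringKrullDim A = m := by
      have h1 := ringKrullDim_ne_bot (R := A)
      have h2 := ringKrullDim_ne_top (R := A)
      generalize ringKrullDim A = D at h1 h2
      induction D with
      | bot => exact absurd rfl h1
      | coe D =>
        induction D with
        | top => exact absurd rfl h2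
        | coe m => exact ⟨m, rfl⟩
    obtain ⟨rs, hlen, hmem, hreg⟩ := (ext_kk_iff_exists_regular A (m + 1)).1 fun i _ => h i
    have hr := RingTheory.Sequence.IsRegular.of_isWeaklyRegular_of_mem_maximalIdeal A hmem hreg
    have h1 := ringKrullDim_add_length_eq_ringKrullDim_of_isRegular rs hr
    have : Nontrivial (A ⧸ Ideal.ofList rs) := by
      refine Ideal.Quotient.nontrivial_iff.2 fun htop => hr.top_ne_smul ?_
      rw [htop, Submodule.top_smul]
    have h2 : (0 : WithBot ℕ∞) + rs.length ≤ m := by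
      rw [← hm, ← h1]
      gcongr
      exact ringKrullDim_nonneg_of_nontrivial
    rw [hlen, zero_add] at h2
    have h3 : m + 1 ≤ m := by exact_mod_cast h2
    omega

/-- The Auslander–Buchsbaum formula over a regular local ring, together with the fact that
`Ext^q(M, N)` is nonzero for `q` the projective dimension of `M`, if `q ≥ 1`. -/
lemma exists_pd {A : Type} [CommRing A] [IsLocalRing A] [IsNoetherianRing A]
    (hA : IsRegularLocal A) {d : ℕ} (hd : HasDepth (ModuleCat.of A A) d)
    (M : Type) [AddCommGroup M] [Module A M] [Module.Finite A M] [Nontrivial M] :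
    ∃ q n, q + n = d ∧ HasProjectiveDimensionLT (ModuleCat.of A M) (q + 1) ∧
      HasDepth (ModuleCat.of A M) n ∧
      ∀ (N : Type) [AddCommGroup N] [Module A N] [Module.Finite A N] [Nontrivial N],
        ExtPattern A M N q 0 := by
  obtain ⟨p, hp⟩ := pd_le_of_isRegularLocal hA
  have := hp M
  obtain ⟨q, n, hqn, hpd, hdep, hne⟩ := ab_aux hd p M (hasProjectiveDimensionLT_of_ge _ p _ (by omega))
  refine ⟨q, n, hqn, hpd, hdep, fun N _ _ _ _ _ => ⟨fun i _ hi => ?_, ?_⟩⟩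
  · exact HasProjectiveDimensionLT.subsingleton _ (q + 1) i hi _
  · rintro i hi rfl
    exact hne hi N

/-- The quotient by a regular sequence of length `c` has projective dimension `c`, so its depth
is `d - c`. -/
lemma hasDepth_quotient {A : Type} [CommRing A] [IsLocalRing A] [IsNoetherianRing A]
    (hA : IsRegularLocal A) {d : ℕ} (hd : HasDepth (ModuleCat.of A A) d)
    (xs : List A) (hreg : RingTheory.Sequence.IsRegular A xs) (M : Type) [AddCommGroup M]
    [Module A M] [Nontrivial M] (e : (A ⧸ Ideal.ofList xs) ≃ₗ[A] M) :
    ∃ n, xs.length + n = d ∧ HasDepth (ModuleCat.of A M) n := by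
  have : Module.Finite A M := Module.Finite.equiv e
  obtain ⟨q, n, hqn, hpd, hdep, hne⟩ := exists_pd hA hd M
  have hpd' : projectiveDimension (ModuleCat.of A M) = xs.length := by
    rw [← ModuleCat.projectiveDimension_quotient_eq_length.{0} xs hreg]
    exact projectiveDimension_eq_of_iso (((Shrink.linearEquiv A _).trans e).toModuleIso).symm
  have hq : xs.length = q := by
    refine le_antisymm ?_ (not_lt.1 fun hlt => ?_)
    · have h1 := (projectiveDimension_le_iff _ q).2 hpd
      rw [hpd'] at h1
      exact_mod_cast h1
    · have h1 : HasProjectiveDimensionLT (ModuleCat.of A M) (xs.length + 1) :=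
        (projectiveDimension_le_iff _ _).1 hpd'.le
      refine (hne M ⟨q + 1, fun i hi => hpd.subsingleton _ _ i hi _⟩).2 q (by omega) rfl ?_
      exact h1.subsingleton _ _ q hlt _
  exact ⟨n, hq ▸ hqn, hdep⟩

end Depth

end CI

/-- Let `R` be a local complete intersection and `M`, `N` nonzero finitely
generated `R`-modules with `Ext^i(M,N) = 0` for all `i ≫ 0`. Then `Ext^i(M,N) = 0` for all
`i > depth R - depth M`, and if `depth M < depth R` then
`Ext^{depth R - depth M}(M,N) ≠ 0`. -/
theorem stmt11 (R : Type) [CommRing R] [IsLocalRing R]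
    (S : Type) [CommRing S] [IsLocalRing S] (hS : IsRegularLocal S)
    (xs : List S) (hreg : RingTheory.Sequence.IsRegular S xs)
    (hx2 : ∀ x ∈ xs, x ∈ (IsLocalRing.maximalIdeal S) ^ 2)
    (e : (S ⧸ Ideal.span {x | x ∈ xs}) ≃+* R)
    (M N : Type) [AddCommGroup M] [Module R M] [AddCommGroup N] [Module R N]
    [Module.Finite R M] [Module.Finite R N] (hM : Nontrivial M) (hN : Nontrivial N)
    (hvan : ∃ i₀ : ℕ, ∀ i ≥ i₀, Subsingleton (ExtM R M N i)) :
    (∀ i : ℕ, depthM R R - depthM R M < (i : ℕ∞) → Subsingleton (ExtM R M N i)) ∧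
      (depthM R M < depthM R R →
        ∀ g : ℕ, (g : ℕ∞) = depthM R R - depthM R M → ¬ Subsingleton (ExtM R M N g)) := by
  have := hS.1
  have hspan : Ideal.span {x | x ∈ xs} = Ideal.ofList xs := rfl
  let φ : S →+* R := e.toRingHom.comp (Ideal.Quotient.mk (Ideal.span {x | x ∈ xs}))
  let : Algebra S R := φ.toAlgebra
  let : Module S M := Module.compHom M φ
  let : Module S N := Module.compHom N φ
  have : IsScalarTower S R M := ⟨fun a b m => by rw [Algebra.smul_def, mul_smul]; rfl⟩
  have : IsScalarTower S R N := ⟨fun a b m => by rw [Algebra.smul_def, mul_smul]; rfl⟩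
  have hsurj : Function.Surjective (algebraMap S R) :=
    e.surjective.comp Ideal.Quotient.mk_surjective
  have hker : RingHom.ker (algebraMap S R) = Ideal.ofList xs := by
    refine Eq.trans ?_ (Ideal.mk_ker (I := Ideal.span {x | x ∈ xs}))
    ext a
    change e _ = 0 ↔ Ideal.Quotient.mk _ a = 0
    exact e.map_eq_zero_iff
  have : IsNoetherianRing R := isNoetherianRing_of_surjective S R _ hsurj
  have : Module.Finite S R := Module.Finite.of_surjective (Algebra.linearMap S R) hsurj
  have : Module.Finite S M := Module.Finite.trans R M
  have : Module.Finite S N := Module.Finite.trans R N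
  let eR : (S ⧸ Ideal.ofList xs) ≃ₗ[S] R :=
    { e.toAddEquiv with
      map_smul' := fun a b => by
        obtain ⟨b, rfl⟩ := Ideal.Quotient.mk_surjective b
        exact map_mul e (Ideal.Quotient.mk _ a) (Ideal.Quotient.mk _ b) }
  obtain ⟨d, hd⟩ := CI.exists_hasDepth_self S
  obtain ⟨r, hr, hdR⟩ := CI.hasDepth_quotient hS hd xs hreg R eR
  obtain ⟨q, n, hqn, -, hdM, hpat⟩ := CI.exists_pd hS hd M
  rw [← CI.hasDepth_iff_of_surjective hsurj] at hdR hdM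
  obtain ⟨hv, hnv⟩ := CI.ExtPattern.list M N xs.length S xs 0 rfl hsurj hker
    hreg.toIsWeaklyRegular (hpat N) (by simpa only [subsingleton_extM_iff] using hvan)
  rw [hdR.depthM_eq, hdM.depthM_eq]
  simp only [subsingleton_extM_iff]
  constructor
  · intro i hi
    have hi' : r - n < i := by exact_mod_cast hi
    exact hv i (by omega) (by omega)
  · intro hlt g hg
    have hlt' : n < r := by exact_mod_cast hlt
    have hg' : g = r - n := by exact_mod_cast hg
    exact hnv g (by omega) (by omega)
end

section
/- Let R be a local complete intersection with cod(R) = dim(R) ≥ 1, and let M and N be maximal Cohen-Macaulay R-modules such that M ⊗_R N is maximal Cohen-Macaulay and Tor_i^R(M,N) has finite length for all i ≫ 0. Then Tor_{2i}^R(M,N) = 0 for all i ≥ 1. -/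
/-!
Write `R = S/(x₁, …, x_c)` with `S` regular local, so that `dim S = 2c`. Maximal Cohen-Macaulay `R`-modules have
projective dimension at most `c` over `S` (`pd_of_depth`). Three facts hold for finite `R`-modules `M` with
`pd_S M ≤ c`; they form the structure `Good` and are proved by induction on `c`
(`good_step`, `good_of_isWeaklyRegular`):

* `M` embeds into a finite free `R`-module with a cokernel that again satisfies `pd_S ≤ c` (`embed_step`);
* if `Tor_i^R(M, N)` is `a`-power torsion for `i ≫ 0`, it is so for all `i ≥ 1`;
* if `Tor_i^R(M, N)` is `a`-power torsion in the degrees `1, …, c`, it is so in all degrees `c + 2k`.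

The last two come from the change-of-rings sequence for `R = T/x` (`exists_change_rings`)
`⋯ → Tor_i^R(M, N) → Tor_{i+1}^T(M, N) → Tor_{i+1}^R(M, N) → Tor_{i-1}^R(M, N) → ⋯`,
which makes `Tor^R` periodic of period two up to torsion wherever `Tor^T` is torsion. The case `a = 1` of torsion is
vanishing.

Starting with `M`, embed repeatedly: `0 → M_j → R^r → M_{j+1} → 0`. Finite length of the higher `Tor` makes
`Tor_1(M_{j+1}, N)` torsion for the maximal ideal, and it is a submodule of `M_j ⊗ N`. As long as
`M_j ⊗ N` has positive depth, this forces `Tor_1(M_{j+1}, N) = 0`, and `M_{j+1} ⊗ N` has depth at least one less.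
Since `M ⊗ N` has depth `c`, this can be done `c` times (`exists_pushforward`). The module `M_c` obtained satisfies
`Tor_i(M_c, N) = 0` for `1 ≤ i ≤ c` and `Tor_{i+c}(M_c, N) ≅ Tor_i(M, N)` for `i ≥ 1`. Thus
`Tor_{c+2k}(M_c, N) = 0`, that is, `Tor_{2k}(M, N) = 0`.
-/

open CategoryTheory TensorProduct

/-! ### Torsion of `Tor` through a flat resolution -/

/-- `Tor_i(M, N)` is `a`-power torsion. Taking `a = 1` says that `Tor_i(M, N)` vanishes, so vanishing and
punctual finiteness are handled by the same lemmas. -/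
def TorTors {T : Type} [CommRing T] (a : T) (M N : Type) [AddCommGroup M] [Module T M]
    [AddCommGroup N] [Module T N] (i : ℕ) : Prop :=
  ∀ t : TorM T M N i, ∃ n : ℕ, a ^ n • t = 0

/-- A flat resolution of `N` in elementary terms, written out as linear maps. -/
structure TorRes (T : Type) [CommRing T] (N : Type) [AddCommGroup N] [Module T N] where
  P : ℕ → ModuleCat.{0} T
  d : ∀ n, P (n + 1) →ₗ[T] P n
  ε : P 0 →ₗ[T] N
  flat : ∀ n, Module.Flat T (P n)
  surj : Function.Surjective ε
  exact₀ : Function.Exact (d 0) ε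
  exact : ∀ n, Function.Exact (d (n + 1)) (d n)

/-- The homology of `M ⊗ P` at the spot `i + 1` is `a`-power torsion, where `P` is the resolution `Q` of `N`. -/
def TorRes.V {T : Type} [CommRing T] {N : Type} [AddCommGroup N] [Module T N]
    (Q : TorRes T N) (a : T) (M : Type) [AddCommGroup M] [Module T M] (i : ℕ) : Prop :=
  ∀ z : M ⊗[T] Q.P (i + 1), (Q.d i).lTensor M z = 0 →
    ∃ n : ℕ, ∃ w : M ⊗[T] Q.P (i + 2), (Q.d (i + 1)).lTensor M w = a ^ n • z

theorem shortComplex_tors {T : Type} [CommRing T] (S : ShortComplex (ModuleCat.{0} T)) (a : T) :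
    (∀ t : S.homology, ∃ n : ℕ, a ^ n • t = 0) ↔
      ∀ z : S.X₂, S.g z = 0 → ∃ n : ℕ, ∃ w : S.X₁, S.f w = a ^ n • z := by
  let e := S.moduleCatHomologyIso.toLinearEquiv
  have h1 : (∀ t : S.homology, ∃ n : ℕ, a ^ n • t = 0) ↔
      ∀ t : (LinearMap.ker S.g.hom) ⧸ LinearMap.range S.moduleCatToCycles, ∃ n : ℕ, a ^ n • t = 0 := by
    constructor
    · intro h t
      obtain ⟨n, hn⟩ := h (e.symm t)
      refine ⟨n, ?_⟩
      have := congrArg e hn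
      rw [map_smul, map_zero] at this
      rwa [e.apply_symm_apply t] at this
    · intro h t
      obtain ⟨n, hn⟩ := h (e t)
      refine ⟨n, e.injective ?_⟩
      rw [map_smul, map_zero]
      exact hn
  rw [h1]
  constructor
  · intro h z hz
    obtain ⟨n, hn⟩ := h (Submodule.Quotient.mk ⟨z, hz⟩)
    rw [← Submodule.Quotient.mk_smul, Submodule.Quotient.mk_eq_zero] at hn
    obtain ⟨w, hw⟩ := hn
    exact ⟨n, w, congrArg Subtype.val hw⟩
  · intro h t
    obtain ⟨⟨z, hz⟩, rfl⟩ := Submodule.Quotient.mk_surjective _ t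
    obtain ⟨n, w, hw⟩ := h z hz
    refine ⟨n, ?_⟩
    rw [← Submodule.Quotient.mk_smul, Submodule.Quotient.mk_eq_zero]
    exact ⟨w, Subtype.ext hw⟩

/-- Balancing is not needed: `Tor` is derived in its second argument, so it is computed by a
resolution of `N`. -/
theorem exists_torRes (T : Type) [CommRing T] (N : Type) [AddCommGroup N] [Module T N] :
    ∃ Q : TorRes T N, ∀ (a : T) (M : Type) [AddCommGroup M] [Module T M] (i : ℕ),
      TorTors a M N (i + 1) ↔ Q.V a M i := by
  let P := projectiveResolution (ModuleCat.of T N)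
  refine ⟨{ P := P.complex.X, d := fun n => (P.complex.d (n+1) n).hom, ε := (P.π.f 0).hom,
            flat := ?_, surj := ?_, exact₀ := ?_, exact := ?_}, ?_⟩
  · intro n
    have h : Projective (P.complex.X n) := P.projective n
    have : Module.Projective T (P.complex.X n) :=
      (IsProjective.iff_projective (R := T) (P.complex.X n)).2 h
    exact Module.Flat.of_projective
  · exact (ModuleCat.epi_iff_surjective (P.π.f 0)).1 inferInstance
  · have h := (ShortComplex.moduleCat_exact_iff _).1 P.exact₀
    intro x
    refine ⟨fun hx => h x hx, ?_⟩
    rintro ⟨y, rfl⟩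
    exact ShortComplex.moduleCat_zero_apply
      (ShortComplex.mk (P.complex.d 1 0) (P.π.f 0) P.complex_d_comp_π_f_zero) y
  · intro n
    have h := (ShortComplex.moduleCat_exact_iff _).1 (P.exact_succ n)
    intro x
    refine ⟨fun hx => h x hx, ?_⟩
    rintro ⟨y, rfl⟩
    exact ShortComplex.moduleCat_zero_apply
      (ShortComplex.mk (P.complex.d (n + 2) (n + 1)) (P.complex.d (n + 1) n)
        (P.complex.d_comp_d _ _ _)) y
  · intro a M _ _ i
    let K := (((MonoidalCategory.tensoringLeft (ModuleCat T)).obj (ModuleCat.of T M)).mapHomologicalComplex _).obj P.complex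
    let e : TorM T M N (i+1) ≃ₗ[T] K.homology (i+1) :=
      (P.isoLeftDerivedObj ((MonoidalCategory.tensoringLeft (ModuleCat T)).obj (ModuleCat.of T M)) (i+1)).toLinearEquiv
    let e2 : TorM T M N (i+1) ≃ₗ[T] (K.sc' (i+2) (i+1) i).homology :=
      e ≪≫ₗ (ShortComplex.homologyMapIso (K.isoSc' (i+2) (i+1) i (by simp) (by simp))).toLinearEquiv
    have := shortComplex_tors (K.sc' (i+2) (i+1) i) a
    refine Iff.trans ?_ this
    constructor
    · intro h t
      obtain ⟨n, hn⟩ := h (e2.symm t)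
      refine ⟨n, e2.symm.injective ?_⟩
      rw [map_smul, map_zero]
      exact hn
    · intro h t
      obtain ⟨n, hn⟩ := h (e2 t)
      refine ⟨n, e2.injective ?_⟩
      rw [map_smul, map_zero]
      exact hn

/-! ### Torsion of `Tor` in short exact sequences -/

section
variable {T : Type} [CommRing T] {N : Type} [AddCommGroup N] [Module T N] (Q : TorRes T N)

theorem TorRes.d_d (M : Type) [AddCommGroup M] [Module T M] (i : ℕ) (z : M ⊗[T] Q.P (i + 2)) :
    (Q.d i).lTensor M ((Q.d (i + 1)).lTensor M z) = 0 := by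
  rw [← LinearMap.comp_apply, ← LinearMap.lTensor_comp, (Q.exact i).linearMap_comp_eq_zero]
  simp

theorem TorRes.ε_d (M : Type) [AddCommGroup M] [Module T M] (z : M ⊗[T] Q.P 1) :
    Q.ε.lTensor M ((Q.d 0).lTensor M z) = 0 := by
  rw [← LinearMap.comp_apply, ← LinearMap.lTensor_comp, Q.exact₀.linearMap_comp_eq_zero]
  simp

theorem lTensor_rTensor_comm {A B X Y : Type} [AddCommGroup A] [Module T A] [AddCommGroup B]
    [Module T B] [AddCommGroup X] [Module T X] [AddCommGroup Y] [Module T Y]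
    (f : A →ₗ[T] B) (d : X →ₗ[T] Y) (z : A ⊗[T] X) :
    d.lTensor B (f.rTensor X z) = f.rTensor Y (d.lTensor A z) := by
  rw [← LinearMap.comp_apply, ← LinearMap.comp_apply, LinearMap.lTensor_comp_rTensor,
    LinearMap.rTensor_comp_lTensor]

theorem TorRes.v_of_flat (a : T) (F : Type) [AddCommGroup F] [Module T F] [Module.Flat T F]
    (i : ℕ) : Q.V a F i := by
  intro z hz
  obtain ⟨w, hw⟩ := ((Module.Flat.lTensor_exact F (Q.exact i)) z).1 hz
  exact ⟨0, w, by simpa using hw⟩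

variable {A B C : Type} [AddCommGroup A] [Module T A] [AddCommGroup B]
    [Module T B] [AddCommGroup C] [Module T C] {f : A →ₗ[T] B} {g : B →ₗ[T] C}

theorem TorRes.v_mid
    (hf : Function.Injective f) (hfg : Function.Exact f g) (hg : Function.Surjective g)
    (a : T) (i : ℕ) (hA : Q.V a A i) (hC : Q.V a C i) : Q.V a B i := by
  have flat := Q.flat
  intro z hz
  obtain ⟨n, w, hw⟩ := hC (g.rTensor _ z) (by rw [lTensor_rTensor_comm, hz, map_zero])
  obtain ⟨w', rfl⟩ := LinearMap.rTensor_surjective _ hg w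
  rw [lTensor_rTensor_comm] at hw
  obtain ⟨y, hy⟩ := ((rTensor_exact (Q.P (i + 1)) hfg hg)
    (a ^ n • z - (Q.d (i + 1)).lTensor B w')).1 (by rw [map_sub, hw, map_smul, sub_self])
  have hy0 : (Q.d i).lTensor A y = 0 := by
    apply Module.Flat.rTensor_preserves_injective_linearMap (M := Q.P i) f hf
    rw [← lTensor_rTensor_comm, hy, map_sub, map_smul, hz, Q.d_d]; simp
  obtain ⟨m, u, hu⟩ := hA y hy0
  refine ⟨m + n, f.rTensor _ u + a ^ m • w', ?_⟩
  rw [map_add, lTensor_rTensor_comm, hu, map_smul, hy, map_smul, smul_sub, sub_add_cancel,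
    pow_add, mul_smul]

theorem TorRes.v_right
    (hf : Function.Injective f) (hfg : Function.Exact f g) (hg : Function.Surjective g)
    (a : T) (i : ℕ) (hB : Q.V a B (i + 1)) (hA : Q.V a A i) :
    Q.V a C (i + 1) := by
  have flat := Q.flat
  intro z hz
  obtain ⟨b, rfl⟩ := LinearMap.rTensor_surjective _ hg z
  rw [lTensor_rTensor_comm] at hz
  obtain ⟨y, hy⟩ := ((rTensor_exact (Q.P (i + 1)) hfg hg) _).1 hz
  have hy0 : (Q.d i).lTensor A y = 0 := by
    apply Module.Flat.rTensor_preserves_injective_linearMap (M := Q.P i) f hf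
    rw [← lTensor_rTensor_comm, hy, Q.d_d]; simp
  obtain ⟨n, u, hu⟩ := hA y hy0
  obtain ⟨m, w, hw⟩ := hB (a ^ n • b - f.rTensor _ u)
    (by rw [map_sub, lTensor_rTensor_comm, hu, map_smul, ← hy, map_smul, sub_self])
  refine ⟨m + n, g.rTensor _ w, ?_⟩
  rw [lTensor_rTensor_comm, hw, map_smul, map_sub, map_smul,
    (rTensor_exact (Q.P (i + 2)) hfg hg).apply_apply_eq_zero, sub_zero, pow_add, mul_smul]

theorem TorRes.v_left
    (hf : Function.Injective f) (hfg : Function.Exact f g) (hg : Function.Surjective g)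
    (a : T) (i : ℕ) (hC : Q.V a C (i + 1)) (hB : Q.V a B i) :
    Q.V a A i := by
  have flat := Q.flat
  intro z hz
  obtain ⟨n, b, hb⟩ := hB (f.rTensor _ z) (by rw [lTensor_rTensor_comm, hz, map_zero])
  obtain ⟨m, c, hc⟩ := hC (g.rTensor _ b) (by
    rw [lTensor_rTensor_comm, hb, map_smul,
      (rTensor_exact (Q.P (i + 1)) hfg hg).apply_apply_eq_zero, smul_zero])
  obtain ⟨c', rfl⟩ := LinearMap.rTensor_surjective _ hg c
  rw [lTensor_rTensor_comm] at hc
  obtain ⟨y, hy⟩ := ((rTensor_exact (Q.P (i + 2)) hfg hg)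
    (a ^ m • b - (Q.d (i + 2)).lTensor B c')).1 (by rw [map_sub, hc, map_smul, sub_self])
  refine ⟨m + n, y, ?_⟩
  apply Module.Flat.rTensor_preserves_injective_linearMap (M := Q.P (i + 1)) f hf
  rw [← lTensor_rTensor_comm, hy, map_sub, map_smul, hb, Q.d_d, sub_zero, map_smul, pow_add,
    mul_smul]

/-- The low-degree case: for `B` flat, `Tor_1(C, N)` is the kernel of `A ⊗ N → B ⊗ N`. -/
theorem TorRes.v_one [Module.Flat T B]
    (hf : Function.Injective f) (hfg : Function.Exact f g) (hg : Function.Surjective g)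
    (a : T) :
    Q.V a C 0 ↔ ∀ t : A ⊗[T] N, f.rTensor N t = 0 → ∃ n : ℕ, a ^ n • t = 0 := by
  have flat := Q.flat
  have ex (M : Type) [AddCommGroup M] [Module T M] := lTensor_exact M Q.exact₀ Q.surj
  constructor
  · intro h t ht
    obtain ⟨y, rfl⟩ := LinearMap.lTensor_surjective _ Q.surj t
    rw [← lTensor_rTensor_comm] at ht
    obtain ⟨b, hb⟩ := (ex B _).1 ht
    obtain ⟨n, c, hc⟩ := h (g.rTensor _ b) (by
      rw [lTensor_rTensor_comm, hb, (rTensor_exact (Q.P 0) hfg hg).apply_apply_eq_zero])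
    obtain ⟨c', rfl⟩ := LinearMap.rTensor_surjective _ hg c
    rw [lTensor_rTensor_comm] at hc
    obtain ⟨u, hu⟩ := ((rTensor_exact (Q.P 1) hfg hg)
      (a ^ n • b - (Q.d 1).lTensor B c')).1 (by rw [map_sub, hc, map_smul, sub_self])
    refine ⟨n, ?_⟩
    have : a ^ n • y = (Q.d 0).lTensor A u := by
      apply Module.Flat.rTensor_preserves_injective_linearMap (M := Q.P 0) f hf
      rw [← lTensor_rTensor_comm, hu, map_sub, map_smul, Q.d_d, sub_zero, map_smul, hb]
    rw [← map_smul, this, Q.ε_d]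
  · intro h z hz
    obtain ⟨b, rfl⟩ := LinearMap.rTensor_surjective _ hg z
    rw [lTensor_rTensor_comm] at hz
    obtain ⟨y, hy⟩ := ((rTensor_exact (Q.P 0) hfg hg) _).1 hz
    obtain ⟨n, hn⟩ := h (Q.ε.lTensor A y) (by rw [← lTensor_rTensor_comm, hy, Q.ε_d])
    rw [← map_smul] at hn
    obtain ⟨u, hu⟩ := (ex A _).1 hn
    obtain ⟨w, hw⟩ := ((Module.Flat.lTensor_exact B (Q.exact 0)) (a ^ n • b - f.rTensor _ u)).1 (by
      rw [map_sub, lTensor_rTensor_comm, hu, map_smul, ← hy, map_smul, sub_self])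
    refine ⟨n, g.rTensor _ w, ?_⟩
    rw [lTensor_rTensor_comm, hw, map_sub, map_smul,
      (rTensor_exact (Q.P 1) hfg hg).apply_apply_eq_zero, sub_zero]
end

section
variable {T : Type} [CommRing T] (N : Type) [AddCommGroup N] [Module T N]

theorem torTors_flat (a : T) (F : Type) [AddCommGroup F] [Module T F] [Module.Flat T F]
    {i : ℕ} (hi : 1 ≤ i) : TorTors a F N i := by
  obtain ⟨Q, hQ⟩ := exists_torRes T N
  obtain ⟨i, rfl⟩ := Nat.exists_eq_add_of_le' hi
  exact (hQ _ _ _).2 (Q.v_of_flat a F i)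

variable {A B C : Type} [AddCommGroup A] [Module T A] [AddCommGroup B]
    [Module T B] [AddCommGroup C] [Module T C] {f : A →ₗ[T] B} {g : B →ₗ[T] C}

theorem torTors_mid
    (hf : Function.Injective f) (hfg : Function.Exact f g) (hg : Function.Surjective g)
    (a : T) {i : ℕ} (hi : 1 ≤ i) (hA : TorTors a A N i) (hC : TorTors a C N i) :
    TorTors a B N i := by
  obtain ⟨Q, hQ⟩ := exists_torRes T N
  obtain ⟨i, rfl⟩ := Nat.exists_eq_add_of_le' hi
  rw [hQ] at *
  exact Q.v_mid hf hfg hg a i hA hC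

theorem torTors_right
    (hf : Function.Injective f) (hfg : Function.Exact f g) (hg : Function.Surjective g)
    (a : T) {i : ℕ} (hi : 1 ≤ i) (hB : TorTors a B N (i + 1))
    (hA : TorTors a A N i) : TorTors a C N (i + 1) := by
  obtain ⟨Q, hQ⟩ := exists_torRes T N
  obtain ⟨i, rfl⟩ := Nat.exists_eq_add_of_le' hi
  rw [hQ] at *
  exact Q.v_right hf hfg hg a i hB hA

theorem torTors_left
    (hf : Function.Injective f) (hfg : Function.Exact f g) (hg : Function.Surjective g)
    (a : T) {i : ℕ} (hi : 1 ≤ i) (hC : TorTors a C N (i + 1))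
    (hB : TorTors a B N i) : TorTors a A N i := by
  obtain ⟨Q, hQ⟩ := exists_torRes T N
  obtain ⟨i, rfl⟩ := Nat.exists_eq_add_of_le' hi
  rw [hQ] at *
  exact Q.v_left hf hfg hg a i hC hB

theorem torTors_one [Module.Flat T B]
    (hf : Function.Injective f) (hfg : Function.Exact f g) (hg : Function.Surjective g)
    (a : T) :
    TorTors a C N 1 ↔ ∀ t : A ⊗[T] N, f.rTensor N t = 0 → ∃ n : ℕ, a ^ n • t = 0 := by
  obtain ⟨Q, hQ⟩ := exists_torRes T N
  rw [hQ a C 0]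
  exact Q.v_one hf hfg hg a

/-- Dimension shift. -/
theorem torTors_shift [Module.Flat T B]
    (hf : Function.Injective f) (hfg : Function.Exact f g) (hg : Function.Surjective g)
    (a : T) {i : ℕ} (hi : 1 ≤ i) :
    TorTors a C N (i + 1) ↔ TorTors a A N i :=
  ⟨fun h => torTors_left N hf hfg hg a hi h (torTors_flat N a B hi),
    fun h => torTors_right N hf hfg hg a hi (torTors_flat N a B (by omega)) h⟩
end

/-! ### Base change of `Tor` along a regular element -/

section
variable {T R : Type} [CommRing T] [CommRing R] [Algebra T R]

section
variable {A B : Type} [AddCommGroup A] [AddCommGroup B] [Module R A] [Module R B]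
  [Module T A] [Module T B] [IsScalarTower T R A] [IsScalarTower T R B]
theorem compatibleSMul_of_surjective (hsurj : Function.Surjective (algebraMap T R)) :
    TensorProduct.CompatibleSMul T R A B where
  smul_tmul r a b := by
    obtain ⟨t, rfl⟩ := hsurj r
    rw [algebraMap_smul, algebraMap_smul, smul_tmul]
end


/-- If `K → K'` and `F → F'` are the reductions modulo `x`, where `R = T/x`, and `x` kills `N`, then
the maps `K ⊗_T N → F ⊗_T N` and `K' ⊗_R N → F' ⊗_R N` are identified. -/
theorem exists_tensor_comparison (hsurj : Function.Surjective (algebraMap T R))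
    (N : Type) [AddCommGroup N] [Module R N] [Module T N] [IsScalarTower T R N]
    (x : T) (hx : algebraMap T R x = 0)
    {K K' F F' : Type} [AddCommGroup K] [Module T K] [AddCommGroup F] [Module T F]
    [AddCommGroup K'] [Module T K'] [Module R K'] [IsScalarTower T R K']
    [AddCommGroup F'] [Module T F'] [Module R F'] [IsScalarTower T R F']
    (π : K →ₗ[T] K') (hπ : Function.Surjective π) (hker : ∀ k, π k = 0 → ∃ k', k = x • k')
    (ρ : F →ₗ[T] F') (hρ : Function.Surjective ρ) (hρker : ∀ k, ρ k = 0 → ∃ k', k = x • k')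
    (f : K →ₗ[T] F) (f' : K' →ₗ[R] F') (hff' : ∀ k, f' (π k) = ρ (f k)) (a : T) :
    (∀ t : K ⊗[T] N, f.rTensor N t = 0 → ∃ n : ℕ, a ^ n • t = 0) ↔
      (∀ t : K' ⊗[R] N, f'.rTensor N t = 0 → ∃ n : ℕ, (algebraMap T R a) ^ n • t = 0) := by
  have key : ∀ {K K' : Type} [AddCommGroup K] [Module T K]
      [AddCommGroup K'] [Module T K'] [Module R K'] [IsScalarTower T R K']
      (π : K →ₗ[T] K') (hπ : Function.Surjective π) (hker : ∀ k, π k = 0 → ∃ k', k = x • k'),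
      ∃ e : K ⊗[T] N →ₗ[T] K' ⊗[R] N, Function.Bijective e ∧ ∀ k n, e (k ⊗ₜ n) = π k ⊗ₜ n := by
    intro K K' _ _ _ _ _ _ π hπ hker
    have : TensorProduct.CompatibleSMul T R K' N := compatibleSMul_of_surjective hsurj
    let e1 : K' ⊗[R] N ≃ₗ[T] K' ⊗[T] N :=
      (TensorProduct.equivOfCompatibleSMul T R T K' N)
    refine ⟨e1.symm.toLinearMap ∘ₗ π.rTensor N, ?_, ?_⟩
    · rw [LinearMap.coe_comp, LinearEquiv.coe_coe, e1.symm.bijective.of_comp_iff']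
      refine ⟨?_, LinearMap.rTensor_surjective _ hπ⟩
      rw [injective_iff_map_eq_zero]
      intro z hz
      have ex : Function.Exact (LinearMap.ker π).subtype π := by
        rw [LinearMap.exact_iff]; simp
      obtain ⟨y, rfl⟩ := ((rTensor_exact N ex hπ) z).1 hz
      clear hz
      induction y using TensorProduct.induction_on with
      | zero => simp
      | add y z hy hz => rw [map_add, hy, hz, add_zero]
      | tmul k n =>
        obtain ⟨k, hk⟩ := k
        obtain ⟨k', rfl⟩ := hker k hk
        have : x • n = 0 := by rw [← algebraMap_smul R, hx, zero_smul]
        simp [smul_tmul, this]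
    · intro k n
      simp only [LinearMap.comp_apply, LinearMap.rTensor_tmul, LinearEquiv.coe_coe]
      rw [LinearEquiv.symm_apply_eq]
      rfl
  obtain ⟨e, he, he'⟩ := key π hπ hker
  obtain ⟨e₂, he₂, he₂'⟩ := key ρ hρ hρker
  have comm : ∀ t, f'.rTensor N (e t) = e₂ (f.rTensor N t) := by
    intro t
    induction t using TensorProduct.induction_on with
    | zero => simp
    | add y z hy hz => simp [hy, hz]
    | tmul k n => simp [he', he₂', hff']
  have sm : ∀ (n : ℕ) t, (algebraMap T R a) ^ n • e t = e (a ^ n • t) := by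
    intro n t
    rw [← map_pow, algebraMap_smul, map_smul]
  constructor
  · intro h t ht
    obtain ⟨t, rfl⟩ := he.2 t
    obtain ⟨n, hn⟩ := h t (he₂.1 (by rw [← comm, ht, map_zero]))
    exact ⟨n, by rw [sm, hn, map_zero]⟩
  · intro h t ht
    obtain ⟨n, hn⟩ := h (e t) (by rw [comm, ht, map_zero])
    exact ⟨n, he.1 (by rw [← sm, hn, map_zero])⟩

/-- Compatible free covers over `T` and over `R = T/x` of the source and target of a surjection
`G → G'`: the cover of `G'` is the reduction modulo `x` of the cover of `G`. -/
theorem exists_compatible_covers (hsurj : Function.Surjective (algebraMap T R))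
    (x : T) (hx : ∀ t : T, algebraMap T R t = 0 ↔ ∃ s, t = x * s)
    {G G' : Type} [AddCommGroup G] [Module T G]
    [AddCommGroup G'] [Module T G'] [Module R G'] [IsScalarTower T R G']
    (π : G →ₗ[T] G') (hπ : Function.Surjective π) :
    ∃ (p : (G →₀ T) →ₗ[T] G) (p' : (G →₀ R) →ₗ[R] G') (ρ : (G →₀ T) →ₗ[T] (G →₀ R)),
      Function.Surjective p ∧ Function.Surjective p' ∧ Function.Surjective ρ ∧
      (∀ z, p' (ρ z) = π (p z)) ∧ (∀ z, ρ z = 0 ↔ ∃ z', z = x • z') := by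
  classical
  have hx0 : algebraMap T R x = 0 := (hx x).2 ⟨1, by simp⟩
  let p : (G →₀ T) →ₗ[T] G := Finsupp.linearCombination T id
  have hp : Function.Surjective p := Finsupp.linearCombination_id_surjective T G
  let p' : (G →₀ R) →ₗ[R] G' := Finsupp.linearCombination R π
  let ρ : (G →₀ T) →ₗ[T] (G →₀ R) := Finsupp.mapRange.linearMap (Algebra.linearMap T R)
  have hρ : Function.Surjective ρ := Finsupp.mapRange_surjective _ (by simp) hsurj
  have comm : ∀ z, p' (ρ z) = π (p z) := by
    intro z
    induction z using Finsupp.induction_linear with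
    | zero => simp
    | add y z hy hz => simp only [map_add, hy, hz]
    | single g t => simp [p, p', ρ]
  have hρker : ∀ z, ρ z = 0 ↔ ∃ z', z = x • z' := by
    intro z
    constructor
    · intro hz
      have : ∀ g, ∃ s, z g = x * s := fun g => (hx _).1 (by
        simpa [ρ] using DFunLike.congr_fun hz g)
      choose s hs using this
      refine ⟨Finsupp.onFinset z.support (fun g => if z g = 0 then 0 else s g)
        (fun g hg => by by_contra h; simp at h; simp [h] at hg), ?_⟩
      ext g
      by_cases h : z g = 0
      · simp [h]
      · simp [h, ← hs]
    · rintro ⟨z, rfl⟩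
      rw [map_smul, ← algebraMap_smul R, hx0, zero_smul]
  have hp' : Function.Surjective p' := by
    intro g
    obtain ⟨g, rfl⟩ := hπ g
    obtain ⟨z, rfl⟩ := hp g
    exact ⟨_, comm z⟩
  exact ⟨p, p', ρ, hp, hp', hρ, comm, hρker⟩

/-- If `x` is regular on `T` and on `G`, `R = T/x` and `G' = G/xG`, then
`Tor_i^T(G, N) ≅ Tor_i^R(G', N)` for `R`-modules `N` and `i ≥ 1`. The proof shifts dimensions down to the
case `i = 1`, using that syzygies of `G` reduce modulo `x` to syzygies of `G'`. -/
theorem torTors_baseChange (hsurj : Function.Surjective (algebraMap T R))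
    (N : Type) [AddCommGroup N] [Module R N] [Module T N] [IsScalarTower T R N]
    (x : T) (hreg : ∀ t : T, x * t = 0 → t = 0)
    (hx : ∀ t : T, algebraMap T R t = 0 ↔ ∃ s, t = x * s) (a : T) :
    ∀ (i : ℕ), ∀ {G G' : Type} [AddCommGroup G] [Module T G]
      [AddCommGroup G'] [Module T G'] [Module R G'] [IsScalarTower T R G']
      (_ : ∀ g : G, x • g = 0 → g = 0)
      (π : G →ₗ[T] G') (_ : Function.Surjective π) (_ : ∀ g, π g = 0 ↔ ∃ g', g = x • g'),
      TorTors a G N (i + 1) ↔ TorTors (algebraMap T R a) G' N (i + 1) := by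
  classical
  intro i
  have hx0 : algebraMap T R x = 0 := (hx x).2 ⟨1, by simp⟩
  induction i with
  | zero => ?_
  | succ i ih => ?_
  all_goals
    intro G G' _ _ _ _ _ _ hG π hπ hker
    obtain ⟨p, p', ρ, hp, hp', hρ, comm, hρker⟩ := exists_compatible_covers hsurj x hx π hπ
    obtain ⟨K, hK⟩ : ∃ K, K = LinearMap.ker p := ⟨_, rfl⟩
    obtain ⟨K', hK'⟩ : ∃ K', K' = LinearMap.ker p' := ⟨_, rfl⟩
    have mK : ∀ z, z ∈ K ↔ p z = 0 := by simp [hK]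
    have mK' : ∀ z, z ∈ K' ↔ p' z = 0 := by simp [hK']
    have ex : Function.Exact K.subtype p := by rw [LinearMap.exact_iff]; simp [hK]
    have ex' : Function.Exact K'.subtype p' := by rw [LinearMap.exact_iff]; simp [hK']
    let κ : K →ₗ[T] K' :=
      { toFun := fun k => ⟨ρ k.1, by
          rw [mK', comm, (mK _).1 k.2, map_zero]⟩
        map_add' := fun a b => Subtype.ext (by simp)
        map_smul' := fun a b => Subtype.ext (by simp) }
    have hκ : Function.Surjective κ := by
      rintro ⟨z, hz⟩
      obtain ⟨z, rfl⟩ := hρ z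
      have : π (p z) = 0 := by rw [← comm]; exact (mK' _).1 hz
      obtain ⟨g, hg⟩ := (hker _).1 this
      obtain ⟨y, rfl⟩ := hp g
      refine ⟨⟨z - x • y, ?_⟩, Subtype.ext ?_⟩
      · rw [mK, map_sub, hg, map_smul, sub_self]
      · change ρ _ = ρ z
        rw [map_sub, (hρker (x • y)).2 ⟨y, rfl⟩, sub_zero]
    have hκker : ∀ k, κ k = 0 ↔ ∃ k', k = x • k' := by
      rintro ⟨k, hk⟩
      constructor
      · intro h
        obtain ⟨z, rfl⟩ := (hρker k).1 (congrArg Subtype.val h)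
        refine ⟨⟨z, (mK _).2 (hG _ ?_)⟩, rfl⟩
        have : p (x • z) = 0 := (mK _).1 hk
        rwa [map_smul] at this
      · rintro ⟨k', h⟩
        rw [h, map_smul, ← algebraMap_smul R, hx0, zero_smul]
  · rw [torTors_one N (A := K) (f := K.subtype) (g := p) K.subtype_injective ex hp a,
      torTors_one N (A := K') (f := K'.subtype) (g := p') K'.subtype_injective ex' hp']
    have h1 : ∀ k, κ k = 0 → ∃ k', k = x • k' := fun k => (hκker k).1
    have h2 : ∀ k, ρ k = 0 → ∃ k', k = x • k' := fun k => (hρker k).1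
    have h3 : ∀ k, K'.subtype (κ k) = ρ (K.subtype k) := fun k => rfl
    clear_value κ
    have h4 := exists_tensor_comparison (K := K) (K' := K') (F := G →₀ T) (F' := G →₀ R) hsurj N x hx0
    have h5 := h4 κ hκ h1 ρ hρ h2 K.subtype K'.subtype h3 a
    exact h5
  · rw [torTors_shift N (A := K) (f := K.subtype) (g := p) K.subtype_injective ex hp a (by omega),
      torTors_shift N (A := K') (f := K'.subtype) (g := p') K'.subtype_injective ex' hp' _ (by omega)]
    refine ih ?_ κ hκ hκker
    intro k hk
    ext g
    exact hreg _ (DFunLike.congr_fun (congrArg Subtype.val hk) g)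
end

/-! ### The change-of-rings sequence -/

/-- A linear map vanishing on the kernel of a surjection factors through it. -/
theorem exists_factor {T : Type} [CommRing T] {F M X : Type} [AddCommGroup F] [Module T F]
    [AddCommGroup M] [Module T M] [AddCommGroup X] [Module T X]
    (p : F →ₗ[T] M) (hp : Function.Surjective p) (μ : F →ₗ[T] X) (h : ∀ f, p f = 0 → μ f = 0) :
    ∃ φ : M →ₗ[T] X, ∀ f, φ (p f) = μ f := by
  refine ⟨(LinearMap.ker p).liftQ μ (fun f hf => h f hf) ∘ₗ
    (p.quotKerEquivOfSurjective hp).symm.toLinearMap, fun f => ?_⟩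
  have : (p.quotKerEquivOfSurjective hp).symm (p f) = Submodule.Quotient.mk f := by
    rw [LinearEquiv.symm_apply_eq]; rfl
  rw [LinearMap.comp_apply, LinearEquiv.coe_coe, this]
  exact Submodule.liftQ_apply _ _ _

section
variable {T R : Type} [CommRing T] [CommRing R] [Algebra T R]

/-- The kernel of `G → R ⊗_T G` is `xG` when `R = T/x`. -/
theorem tmul_one_eq_zero_iff (x : T) (hsurj : Function.Surjective (algebraMap T R))
    (hx : ∀ t : T, algebraMap T R t = 0 ↔ ∃ s, t = x * s)
    {G : Type} [AddCommGroup G] [Module T G] (g : G) :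
    (1 : R) ⊗ₜ[T] g = 0 ↔ ∃ g', g = x • g' := by
  constructor
  · intro h
    have ex : Function.Exact (LinearMap.lsmul T T x) (Algebra.linearMap T R) := by
      intro t
      rw [Algebra.linearMap_apply, hx]
      exact ⟨fun ⟨s, h⟩ => ⟨s, h.symm⟩, fun ⟨s, h⟩ => ⟨s, h.symm⟩⟩
    obtain ⟨y, hy⟩ := ((rTensor_exact G ex hsurj) ((1 : T) ⊗ₜ g)).1 (by simpa using h)
    refine ⟨TensorProduct.lid T G y, ?_⟩
    have : ∀ y, TensorProduct.lid T G ((LinearMap.lsmul T T x).rTensor G y) =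
        x • TensorProduct.lid T G y := by
      intro y
      induction y using TensorProduct.induction_on with
      | zero => simp
      | add y z hy hz => simp only [map_add, hy, hz, smul_add]
      | tmul k n => simp [mul_smul]
    rw [← this, hy]; simp
  · rintro ⟨g, rfl⟩
    rw [← smul_tmul, Algebra.smul_def, (hx x).2 ⟨1, by simp⟩]; simp

/-- The change-of-rings sequence for `R = T/x` with `x` a nonzerodivisor, at the level of torsion
conditions. Let `G` be a first `T`-syzygy of the `R`-module `M`. There is an exact sequence
`0 → M → G/xG → A → 0` of `R`-modules with `A` a first `R`-syzygy of `M`. The predicates `VG` and `VA`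
are the conditions on `Tor^R(G/xG, N)` and `Tor^R(A, N)`; by base change and dimension shift they are the
conditions on `Tor_{i+1}^T(M, N)` and `Tor_{i+1}^R(M, N)`, which yields the usual sequence
`Tor_i^R(M, N) → Tor_{i+1}^T(M, N) → Tor_{i+1}^R(M, N) → Tor_{i-1}^R(M, N)`. -/
theorem exists_change_rings (hsurj : Function.Surjective (algebraMap T R))
    (N : Type) [AddCommGroup N] [Module R N] [Module T N] [IsScalarTower T R N]
    (x : T) (hreg : ∀ t : T, x * t = 0 → t = 0)
    (hx : ∀ t : T, algebraMap T R t = 0 ↔ ∃ s, t = x * s)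
    (M : Type) [AddCommGroup M] [Module R M] [Module T M] [IsScalarTower T R M] (a : T) :
    ∃ VG VA : ℕ → Prop,
      (∀ i ≥ 1, VG i ↔ TorTors a M N (i + 1)) ∧
      (∀ i ≥ 1, VA i ↔ TorTors (algebraMap T R a) M N (i + 1)) ∧
      (∀ i ≥ 1, TorTors (algebraMap T R a) M N i → VA i → VG i) ∧
      (∀ i ≥ 1, VG (i + 1) → TorTors (algebraMap T R a) M N i → VA (i + 1)) ∧
      (∀ i ≥ 1, VA (i + 1) → VG i → TorTors (algebraMap T R a) M N i) := by
  have hx0 : algebraMap T R x = 0 := (hx x).2 ⟨1, by simp⟩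
  have hxM : ∀ m : M, x • m = 0 := fun m => by rw [← algebraMap_smul R, hx0, zero_smul]
  obtain ⟨p, p', ρ, hp, hp', hρ, comm, hρker⟩ :=
    exists_compatible_covers hsurj x hx (LinearMap.id : M →ₗ[T] M) Function.surjective_id
  simp only [LinearMap.id_apply] at comm
  have hxF : ∀ z : M →₀ T, x • z = 0 → z = 0 := fun z hz => by
    ext g; exact hreg _ (DFunLike.congr_fun hz g)
  obtain ⟨G, hG⟩ : ∃ K, K = LinearMap.ker p := ⟨_, rfl⟩
  obtain ⟨A, hA⟩ : ∃ K', K' = LinearMap.ker p' := ⟨_, rfl⟩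
  have mG : ∀ z, z ∈ G ↔ p z = 0 := by simp [hG]
  have mA : ∀ z, z ∈ A ↔ p' z = 0 := by simp [hA]
  have ex : Function.Exact G.subtype p := by rw [LinearMap.exact_iff]; simp [hG]
  have ex' : Function.Exact A.subtype p' := by rw [LinearMap.exact_iff]; simp [hA]
  let π : G →ₗ[T] R ⊗[T] G := TensorProduct.mk T R G 1
  have hπker : ∀ g, π g = 0 ↔ ∃ g', g = x • g' :=
    fun g => tmul_one_eq_zero_iff (R := R) x hsurj hx g
  have hπ : Function.Surjective π := by
    intro z
    induction z using TensorProduct.induction_on with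
    | zero => exact ⟨0, map_zero _⟩
    | add y z hy hz =>
      obtain ⟨y, rfl⟩ := hy
      obtain ⟨z, rfl⟩ := hz
      exact ⟨y + z, map_add _ _ _⟩
    | tmul r g =>
      obtain ⟨t, rfl⟩ := hsurj r
      refine ⟨t • g, ?_⟩
      change (1 : R) ⊗ₜ[T] (t • g) = _
      rw [← smul_tmul, Algebra.smul_def, mul_one]
  clear_value π
  let μ : (M →₀ T) →ₗ[T] R ⊗[T] G := π ∘ₗ
    { toFun := fun z => ⟨x • z, by rw [mG, map_smul, hxM]⟩
      map_add' := fun a b => Subtype.ext (smul_add _ _ _)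
      map_smul' := fun t b => Subtype.ext (smul_comm _ _ _) }
  have hμ : ∀ z, μ z = π ⟨x • z, by rw [mG, map_smul, hxM]⟩ := fun z => rfl
  have hμ0 : ∀ z, μ z = 0 ↔ p z = 0 := by
    intro z
    rw [hμ, hπker]
    constructor
    · rintro ⟨⟨w, hw⟩, h⟩
      have h : x • z = x • w := congrArg Subtype.val h
      rw [← sub_eq_zero, ← smul_sub] at h
      rw [sub_eq_zero.1 (hxF _ h), ← mG]; exact hw
    · intro h
      exact ⟨⟨z, (mG z).2 h⟩, rfl⟩
  clear_value μ
  obtain ⟨f1, hf1⟩ := exists_factor p hp μ fun f => (hμ0 f).2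
  let ν : G →ₗ[T] A :=
      { toFun := fun k => ⟨ρ k.1, by rw [mA, comm, (mG _).1 k.2]⟩
        map_add' := fun a b => Subtype.ext (by simp)
        map_smul' := fun a b => Subtype.ext (by simp) }
  have hν : ∀ g, (ν g : M →₀ R) = ρ g.1 := fun g => rfl
  clear_value ν
  obtain ⟨f2, hf2⟩ := exists_factor (F := G) (M := R ⊗[T] G) (X := A) π hπ ν fun g hg => by
    obtain ⟨g', rfl⟩ := (hπker g).1 hg
    rw [map_smul, ← algebraMap_smul R, hx0, zero_smul]
  let φ1 : M →ₗ[R] R ⊗[T] G := f1.extendScalarsOfSurjective hsurj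
  let φ2 : R ⊗[T] G →ₗ[R] A := f2.extendScalarsOfSurjective hsurj
  have h1 : Function.Injective φ1 := by
    rw [injective_iff_map_eq_zero]
    intro m hm
    obtain ⟨z, rfl⟩ := hp m
    rw [← hμ0, ← hf1]; exact hm
  have h2 : Function.Surjective φ2 := by
    rintro ⟨a, ha⟩
    obtain ⟨z, rfl⟩ := hρ a
    refine ⟨π ⟨z, ?_⟩, Subtype.ext ?_⟩
    · rw [mG, ← comm]; exact (mA _).1 ha
    · change ((f2 _ : A) : M →₀ R) = _
      rw [hf2, hν]
  have h12 : Function.Exact φ1 φ2 := by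
    intro w
    obtain ⟨g, rfl⟩ := hπ w
    change f2 _ = 0 ↔ ∃ m, f1 m = _
    rw [hf2]
    constructor
    · intro h
      have h := congrArg Subtype.val h
      rw [hν] at h
      obtain ⟨z, hz⟩ := (hρker _).1 h
      refine ⟨p z, ?_⟩
      rw [hf1, hμ]
      congr 1
      exact Subtype.ext hz.symm
    · rintro ⟨m, hm⟩
      obtain ⟨z, rfl⟩ := hp m
      rw [hf1, hμ] at hm
      rw [← hf2, ← hm, hf2]
      refine Subtype.ext ?_
      rw [hν]
      exact (hρker _).2 ⟨z, rfl⟩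
  refine ⟨fun i => TorTors (algebraMap T R a) (R ⊗[T] G) N i,
    fun i => TorTors (algebraMap T R a) A N i, ?_, ?_, ?_, ?_, ?_⟩
  · intro i hi
    rw [torTors_shift N (A := G) (f := G.subtype) (g := p) G.subtype_injective ex hp a hi]
    obtain ⟨i, rfl⟩ := Nat.exists_eq_add_of_le' hi
    refine (torTors_baseChange hsurj N x hreg hx a i ?_ π hπ hπker).symm
    intro g hg
    exact Subtype.ext (hxF _ (congrArg Subtype.val hg))
  · intro i hi
    rw [torTors_shift N (A := A) (f := A.subtype) (g := p') A.subtype_injective ex' hp' _ hi]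
  · intro i hi h h'
    exact torTors_mid N h1 h12 h2 _ hi h h'
  · intro i hi h h'
    exact torTors_right N h1 h12 h2 _ hi h h'
  · intro i hi h h'
    exact torTors_left N h1 h12 h2 _ hi h h'
end

/-! ### Projective dimension, and the induction hypothesis on the codimension -/

/-- The projective dimension of the `S`-module `M` is at most `d`. -/
def PD (S : Type) [CommRing S] (M : Type) [AddCommGroup M] [Module S M] (d : ℕ) : Prop :=
  HasProjectiveDimensionLE (ModuleCat.of S M) d

section
variable {S : Type} [CommRing S]

theorem pd_mono {M : Type} [AddCommGroup M] [Module S M] {d d' : ℕ} (h : d ≤ d') (hM : PD S M d) :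
    PD S M d' := by
  unfold PD at *
  exact hasProjectiveDimensionLT_of_ge _ (d + 1) (d' + 1) (by omega)

theorem pd_zero_iff {M : Type} [AddCommGroup M] [Module S M] :
    PD S M 0 ↔ Module.Projective S M := by
  unfold PD
  rw [← projective_iff_hasProjectiveDimensionLE_zero, ← IsProjective.iff_projective]

theorem pd_of_subsingleton {M : Type} [AddCommGroup M] [Module S M] [Subsingleton M] (d : ℕ) :
    PD S M d :=
  pd_mono (Nat.zero_le d) (pd_zero_iff.2 inferInstance)

theorem pd_equiv {M M' : Type} [AddCommGroup M] [Module S M] [AddCommGroup M'] [Module S M']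
    (e : M ≃ₗ[S] M') {d : ℕ} (hM : PD S M d) : PD S M' d := by
  unfold PD at *
  exact ModuleCat.hasProjectiveDimensionLE_of_linearEquiv (M := ModuleCat.of S M)
    (N := ModuleCat.of S M') e d

section
variable {A B C : Type} [AddCommGroup A] [Module S A] [AddCommGroup B]
    [Module S B] [AddCommGroup C] [Module S C] {f : A →ₗ[S] B} {g : B →ₗ[S] C}

theorem shortExact_of_maps
    (hf : Function.Injective f) (hfg : Function.Exact f g) (hg : Function.Surjective g) :
    (ModuleCat.shortComplexOfCompEqZero f g hfg.linearMap_comp_eq_zero).ShortExact :=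
  ModuleCat.shortComplex_shortExact _ hfg hf hg

theorem pd_mid
    (hf : Function.Injective f) (hfg : Function.Exact f g) (hg : Function.Surjective g)
    {d : ℕ} (hA : PD S A d) (hC : PD S C d) : PD S B d :=
  (shortExact_of_maps hf hfg hg).hasProjectiveDimensionLT_X₂ _ hA hC

theorem pd_right
    (hf : Function.Injective f) (hfg : Function.Exact f g) (hg : Function.Surjective g)
    {d : ℕ} (hA : PD S A d) (hB : PD S B (d + 1)) : PD S C (d + 1) :=
  (shortExact_of_maps hf hfg hg).hasProjectiveDimensionLT_X₃ _ hA hB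

theorem pd_left
    (hf : Function.Injective f) (hfg : Function.Exact f g) (hg : Function.Surjective g)
    {d : ℕ} (hB : PD S B d) (hC : PD S C (d + 1)) : PD S A d :=
  (shortExact_of_maps hf hfg hg).hasProjectiveDimensionLT_X₁ _ hB hC
end

theorem pd_pi {T : Type} [AddCommGroup T] [Module S T] {d : ℕ} (h : PD S T d) (n : ℕ) :
    PD S (Fin n → T) d := by
  induction n with
  | zero => exact pd_of_subsingleton d
  | succ n ih =>
    refine pd_equiv (Fin.consLinearEquiv S (fun _ : Fin (n + 1) => T)) ?_
    exact pd_mid (f := LinearMap.inl S T (Fin n → T)) (g := LinearMap.snd S T (Fin n → T))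
      LinearMap.inl_injective .inl_snd LinearMap.snd_surjective h ih

/-- Presentation by a finite free module. -/
theorem exists_cover {T M : Type} [CommRing T] [IsNoetherianRing T] [AddCommGroup M] [Module T M]
    [Module.Finite T M] : ∃ (r : ℕ) (K : Submodule T (Fin r → T)) (p : (Fin r → T) →ₗ[T] M),
      Function.Surjective p ∧ K = LinearMap.ker p ∧ Function.Exact K.subtype p ∧
      Module.Finite T K := by
  obtain ⟨r, p, hp⟩ := Module.Finite.exists_fin' T M
  exact ⟨r, LinearMap.ker p, p, hp, rfl, by rw [LinearMap.exact_iff]; simp, inferInstance⟩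

/-- Properties of an `S`-algebra `T` which hold for `T = S/(x₁, …, x_j)`, with `S` a Noetherian local
ring and `x₁, …, x_j` a regular sequence, and which are proved by induction on `j`. For finite
`T`-modules `M`:
* `embed`: if `pd_S M ≤ j` then `M` embeds into a finite free `T`-module with a cokernel of the same
  kind (the pushforward of `M`);
* `vanish`: if `pd_S M ≤ j + s`, torsion of `Tor_i^T(M, N)` for `i ≫ 0` propagates to all `i > s`;
* `period`: if `pd_S M ≤ j + s`, torsion in `j` consecutive degrees beyond `s` propagates to every second
  degree above the last of them. -/
structure Good (S T : Type) [CommRing S] [CommRing T] [Algebra S T] (j : ℕ) : Prop where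
  pd_self : PD S T j
  embed : ∀ (M : Type) [AddCommGroup M] [Module T M] [Module S M] [IsScalarTower S T M]
    [Module.Finite T M], PD S M j → ∃ (n : ℕ) (φ : M →ₗ[T] (Fin n → T)),
      Function.Injective φ ∧ PD S ((Fin n → T) ⧸ LinearMap.range φ) j
  vanish : ∀ (M : Type) [AddCommGroup M] [Module T M] [Module S M] [IsScalarTower S T M]
    [Module.Finite T M] (N : Type) [AddCommGroup N] [Module T N] (a : T) (s i₀ : ℕ),
      PD S M (j + s) → (∀ i ≥ i₀, TorTors a M N i) → ∀ i > s, TorTors a M N i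
  period : ∀ (M : Type) [AddCommGroup M] [Module T M] [Module S M] [IsScalarTower S T M]
    [Module.Finite T M] (N : Type) [AddCommGroup N] [Module T N] (a : T) (s i₀ : ℕ),
      PD S M (j + s) → s ≤ i₀ → (∀ i, i₀ + 1 ≤ i → i ≤ i₀ + j → TorTors a M N i) →
      ∀ k ≥ 1, TorTors a M N (i₀ + j + 2 * k)

section base
variable {T : Type} [CommRing T] [Algebra S T] [IsLocalRing S]

theorem equiv_pi_of_pd_zero (hT : Function.Bijective (algebraMap S T))
    (M : Type) [AddCommGroup M] [Module T M] [Module S M] [IsScalarTower S T M]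
    [Module.Finite T M] (h : PD S M 0) : ∃ n : ℕ, Nonempty (M ≃ₗ[T] (Fin n → T)) := by
  have : Module.Finite S T := Module.Finite.of_surjective (Algebra.linearMap S T) hT.2
  have : Module.Finite S M := Module.Finite.trans T M
  have := pd_zero_iff.1 h
  have : Module.Free S M := Module.free_of_flat_of_isLocalRing
  have e : M ≃ₗ[S] (Fin (Module.finrank S M) → S) := (Module.finBasis S M).equivFun
  have e2 : (Fin (Module.finrank S M) → S) ≃ₗ[S] (Fin (Module.finrank S M) → T) :=
    LinearEquiv.piCongrRight fun _ => LinearEquiv.ofBijective (Algebra.linearMap S T) hT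
  exact ⟨_, ⟨(e.trans e2).extendScalarsOfSurjective hT.2⟩⟩

/-- The case of codimension zero: `Tor_i(M, N)` vanishes above the projective dimension of `M`. -/
theorem torTors_of_pd [IsNoetherianRing S] (hT : Function.Bijective (algebraMap S T))
    (N : Type) [AddCommGroup N] [Module T N] (a : T) (s : ℕ) :
    ∀ (M : Type) [AddCommGroup M] [Module T M] [Module S M] [IsScalarTower S T M]
    [Module.Finite T M], PD S M s → ∀ i > s, TorTors a M N i := by
  have : IsNoetherianRing T := isNoetherianRing_of_surjective S T (algebraMap S T) hT.2
  have hT0 : PD S T 0 := pd_zero_iff.2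
    (Module.Projective.of_equiv (LinearEquiv.ofBijective (Algebra.linearMap S T) hT))
  induction s with
  | zero =>
    intro M _ _ _ _ _ h i hi
    obtain ⟨n, ⟨e⟩⟩ := equiv_pi_of_pd_zero hT M h
    have : Module.Flat T M := Module.Flat.of_linearEquiv e
    exact torTors_flat N a M hi
  | succ s ih =>
    intro M _ _ _ _ _ h i hi
    obtain ⟨r, K, p, hp, -, ex, _⟩ := exists_cover (T := T) (M := M)
    obtain ⟨i, rfl⟩ := Nat.exists_eq_add_of_le' (show 1 ≤ i by omega)
    rw [torTors_shift N (A := K) (f := K.subtype) (g := p) K.subtype_injective ex hp a (by omega)]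
    refine ih K ?_ i (by omega)
    exact pd_left (f := K.subtype.restrictScalars S) (g := p.restrictScalars S)
      K.subtype_injective ex hp (pd_mono (Nat.zero_le _) (pd_pi hT0 r)) h

theorem good_zero [IsNoetherianRing S] (hT : Function.Bijective (algebraMap S T)) : Good S T 0 where
  pd_self := pd_zero_iff.2
    (Module.Projective.of_equiv (LinearEquiv.ofBijective (Algebra.linearMap S T) hT))
  embed M _ _ _ _ _ h := by
    obtain ⟨n, ⟨e⟩⟩ := equiv_pi_of_pd_zero hT M h
    refine ⟨n, e.toLinearMap, e.injective, ?_⟩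
    have : Subsingleton ((Fin n → T) ⧸ LinearMap.range e.toLinearMap) := by
      rw [Submodule.Quotient.subsingleton_iff]
      exact LinearEquiv.range e
    exact pd_of_subsingleton 0
  vanish M _ _ _ _ _ N _ _ a s i₀ h _ i hi :=
    torTors_of_pd hT N a s M (by simpa using h) i hi
  period M _ _ _ _ _ N _ _ a s i₀ h hs _ k hk :=
    torTors_of_pd hT N a s M (by simpa using h) _ (by omega)
end base
end

/-! ### Raising the codimension by one -/

section step
variable {S T R : Type} [CommRing S] [CommRing T] [CommRing R] [Algebra S T] [Algebra T R]
  [Algebra S R] [IsScalarTower S T R]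

theorem pd_self_step (x : T) (hsurj : Function.Surjective (algebraMap T R))
    (hreg : ∀ t : T, x * t = 0 → t = 0) (hx : ∀ t : T, algebraMap T R t = 0 ↔ ∃ s, t = x * s)
    {j : ℕ} (h : PD S T j) : PD S R (j + 1) := by
  refine pd_right (f := (LinearMap.lsmul T T x).restrictScalars S)
    (g := (Algebra.linearMap T R).restrictScalars S) ?_ ?_ hsurj h (pd_mono (Nat.le_succ j) h)
  · rw [injective_iff_map_eq_zero]
    exact hreg
  · intro t
    change algebraMap T R t = 0 ↔ ∃ s, x * s = t
    rw [hx]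
    exact exists_congr fun s => eq_comm

/-- The pushforward passes from `T` to `R = T/x`. Let `0 → K → F → M → 0` be exact with `F` finite free over
`T`, and let `φ : K → T^n` be a pushforward of the syzygy `K` with cokernel `C`. As `xF ⊆ K`, the map
`θ = φ ∘ x : F → T^n` is defined and induces `M → R^n`. It is injective because `x` is regular on `C`
(as `C` embeds into a free `T`-module). Its cokernel `T^n / L` with `L = θ(F) + x T^n` has the right
projective dimension since `L` is an extension of `C` by `F`. -/
theorem embed_step [IsNoetherianRing T] (x : T) (hsurj : Function.Surjective (algebraMap T R))
    (hreg : ∀ t : T, x * t = 0 → t = 0) (hx : ∀ t : T, algebraMap T R t = 0 ↔ ∃ s, t = x * s)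
    {j : ℕ} (h : Good S T j)
    (M : Type) [AddCommGroup M] [Module R M] [Module T M] [Module S M] [IsScalarTower T R M]
    [IsScalarTower S T M] [IsScalarTower S R M] [Module.Finite R M] (hM : PD S M (j + 1)) :
    ∃ (n : ℕ) (φ : M →ₗ[R] (Fin n → R)),
      Function.Injective φ ∧ PD S ((Fin n → R) ⧸ LinearMap.range φ) (j + 1) := by
  have hx0 : algebraMap T R x = 0 := (hx x).2 ⟨1, by simp⟩
  have hxM : ∀ m : M, x • m = 0 := fun m => by rw [← algebraMap_smul R, hx0, zero_smul]
  have hxpi : ∀ (n : ℕ) (z : Fin n → T), x • z = 0 → z = 0 := fun n z hz => by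
    ext g; exact hreg _ (congrFun hz g)
  have : Module.Finite T R := Module.Finite.of_surjective (Algebra.linearMap T R) hsurj
  have : Module.Finite T M := Module.Finite.trans R M
  obtain ⟨r, K, p, hp, hK, ex, _⟩ := exists_cover (T := T) (M := M)
  have mK : ∀ z, z ∈ K ↔ p z = 0 := by simp [hK]
  have pdK : PD S K j := pd_left (f := K.subtype.restrictScalars S) (g := p.restrictScalars S)
      K.subtype_injective ex hp (pd_pi h.pd_self r) hM
  obtain ⟨n, φ, hφ, hpd⟩ := h.embed K pdK
  -- `x` is regular on the cokernel of `φ`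
  have reg : ∀ w, x • w ∈ LinearMap.range φ → w ∈ LinearMap.range φ := by
    intro w hw
    have : Module.Finite T ((Fin n → T) ⧸ LinearMap.range φ) := inferInstance
    obtain ⟨n2, ψ, hψ, -⟩ := h.embed ((Fin n → T) ⧸ LinearMap.range φ) hpd
    rw [← Submodule.Quotient.mk_eq_zero] at hw ⊢
    rw [Submodule.Quotient.mk_smul] at hw
    apply hψ
    rw [map_zero]
    apply hxpi
    rw [← map_smul, hw, map_zero]
  let red : (Fin n → T) →ₗ[T] (Fin n → R) := (Algebra.linearMap T R).compLeft (Fin n)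
  have hred : Function.Surjective red := by
    intro z
    choose y hy using fun i => hsurj (z i)
    exact ⟨y, funext hy⟩
  have hred0 : ∀ z, red z = 0 ↔ ∃ w, z = x • w := by
    intro z
    constructor
    · intro hz
      choose y hy using fun i => (hx _).1 (congrFun hz i)
      exact ⟨y, funext hy⟩
    · rintro ⟨w, rfl⟩
      rw [map_smul, ← algebraMap_smul R, hx0, zero_smul]
  clear_value red
  let θ : (Fin r → T) →ₗ[T] (Fin n → T) := φ ∘ₗ
    { toFun := fun z => ⟨x • z, by rw [mK, map_smul, hxM]⟩
      map_add' := fun a b => Subtype.ext (smul_add _ _ _)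
      map_smul' := fun t b => Subtype.ext (smul_comm _ _ _) }
  have hθ : ∀ z, θ z = φ ⟨x • z, by rw [mK, map_smul, hxM]⟩ := fun z => rfl
  have hθK : ∀ z (hz : z ∈ K), θ z = x • φ ⟨z, hz⟩ := fun z hz => by
    rw [hθ, ← map_smul φ]; rfl
  have hθφ : ∀ z w, θ z = x • w → ∃ hz : z ∈ K, w = φ ⟨z, hz⟩ := by
    intro z w hzw
    obtain ⟨⟨k, hk⟩, rfl⟩ := reg w ⟨_, (hθ z).symm.trans hzw⟩
    rw [hθ, ← map_smul φ] at hzw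
    have := congrArg Subtype.val (hφ hzw)
    have hzk : x • z = x • k := this
    rw [← sub_eq_zero, ← smul_sub] at hzk
    obtain rfl := sub_eq_zero.1 (hxpi _ _ hzk)
    exact ⟨hk, rfl⟩
  have hθinj : Function.Injective θ := by
    rw [injective_iff_map_eq_zero]
    intro z hz
    obtain ⟨hk, h0⟩ := hθφ z 0 (by rw [hz, smul_zero])
    exact congrArg Subtype.val (hφ (h0.symm.trans (map_zero φ).symm))
  clear_value θ
  have hμ0 : ∀ z, red (θ z) = 0 ↔ p z = 0 := by
    intro z
    rw [hred0, ← mK]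
    constructor
    · rintro ⟨w, hw⟩
      exact (hθφ z w hw).1
    · intro hz
      exact ⟨_, hθK z hz⟩
  obtain ⟨f1, hf1⟩ := exists_factor p hp (red ∘ₗ θ) fun f => (hμ0 f).2
  simp only [LinearMap.comp_apply] at hf1
  let f1R : M →ₗ[R] (Fin n → R) := f1.extendScalarsOfSurjective hsurj
  have hf1R : ∀ m, f1R m = f1 m := fun m => rfl
  clear_value f1R
  refine ⟨n, f1R, ?_, ?_⟩
  · rw [injective_iff_map_eq_zero]
    intro m hm
    obtain ⟨z, rfl⟩ := hp m
    rw [← hμ0, ← hf1, ← hf1R]; exact hm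
  let q : (Fin n → T) →ₗ[T] ((Fin n → R) ⧸ LinearMap.range f1R) :=
    (LinearMap.range f1R).mkQ.restrictScalars T ∘ₗ red
  have hq : Function.Surjective q := (Submodule.mkQ_surjective _).comp hred
  have hq0 : ∀ w, q w = 0 ↔ ∃ z v, w = θ z + x • v := by
    intro w
    change (LinearMap.range f1R).mkQ (red w) = 0 ↔ _
    rw [Submodule.mkQ_apply, Submodule.Quotient.mk_eq_zero]
    constructor
    · rintro ⟨m, hm⟩
      obtain ⟨z, rfl⟩ := hp m
      rw [hf1R, hf1, eq_comm, ← sub_eq_zero, ← map_sub] at hm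
      obtain ⟨v, hv⟩ := (hred0 _).1 hm
      exact ⟨z, v, by rw [← hv]; abel⟩
    · rintro ⟨z, v, rfl⟩
      refine ⟨p z, ?_⟩
      rw [hf1R, hf1, map_add, (hred0 (x • v)).2 ⟨v, rfl⟩, add_zero]
  clear_value q
  obtain ⟨L, hL⟩ : ∃ L, L = LinearMap.ker q := ⟨_, rfl⟩
  have mL : ∀ w, w ∈ L ↔ q w = 0 := by simp [hL]
  have exL : Function.Exact L.subtype q := by rw [LinearMap.exact_iff]; simp [hL]
  -- `L` is an extension of the cokernel of `φ` by a free module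
  let u : ((Fin r → T) × (Fin n → T)) →ₗ[T] L :=
    (LinearMap.coprod θ (LinearMap.lsmul T _ x)).codRestrict L fun zv => by
      rw [mL, hq0]; exact ⟨zv.1, zv.2, rfl⟩
  have hu : ∀ z v, (u (z, v) : Fin n → T) = θ z + x • v := fun z v => rfl
  have husurj : Function.Surjective u := by
    rintro ⟨w, hw⟩
    obtain ⟨z, v, rfl⟩ := (hq0 w).1 ((mL w).1 hw)
    exact ⟨(z, v), rfl⟩
  clear_value u
  obtain ⟨w, hw⟩ := exists_factor u husurj ((LinearMap.range φ).mkQ ∘ₗ LinearMap.snd T _ _) (by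
    rintro ⟨z, v⟩ hzv
    have := congrArg Subtype.val hzv
    rw [hu, Submodule.coe_zero, ← eq_neg_iff_add_eq_zero, ← smul_neg] at this
    obtain ⟨hz, hv⟩ := hθφ z (-v) this
    change (LinearMap.range φ).mkQ v = 0
    rw [Submodule.mkQ_apply, Submodule.Quotient.mk_eq_zero, ← neg_mem_iff, hv]
    exact ⟨_, rfl⟩)
  have hw : ∀ z v, w (u (z, v)) = (LinearMap.range φ).mkQ v := fun z v => hw (z, v)
  let i : (Fin r → T) →ₗ[T] L := u ∘ₗ LinearMap.inl T _ _
  have hi : ∀ z, i z = u (z, 0) := fun z => rfl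
  clear_value i
  have hi' : ∀ z, (i z : Fin n → T) = θ z := fun z => by rw [hi, hu, smul_zero, add_zero]
  have pdL : PD S L j := by
    refine pd_mid (f := i.restrictScalars S) (g := w.restrictScalars S) ?_ ?_ ?_
      (pd_pi h.pd_self r) hpd
    · intro z z' hzz
      apply hθinj
      rw [← hi', ← hi']
      exact congrArg Subtype.val hzz
    · intro l
      obtain ⟨⟨z, v⟩, rfl⟩ := husurj l
      change w (u (z, v)) = 0 ↔ ∃ y, i y = _
      rw [hw, Submodule.mkQ_apply, Submodule.Quotient.mk_eq_zero]
      constructor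
      · rintro ⟨⟨k, hk⟩, rfl⟩
        refine ⟨z + k, Subtype.ext ?_⟩
        rw [hi', hu, map_add, hθK k hk]
      · rintro ⟨y, hy⟩
        have := congrArg Subtype.val hy
        rw [hi', hu, ← sub_eq_iff_eq_add', ← map_sub] at this
        obtain ⟨hz, hv⟩ := hθφ _ v this
        exact ⟨_, hv.symm⟩
    · intro y
      obtain ⟨v, rfl⟩ := Submodule.mkQ_surjective _ y
      exact ⟨u (0, v), hw 0 v⟩
  exact pd_right (f := L.subtype.restrictScalars S) (g := q.restrictScalars S)
    L.subtype_injective exL hq pdL (pd_mono (Nat.le_succ j) (pd_pi h.pd_self n))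

/-- The three properties pass from `T` to `R = T/x`. For `vanish` and `period`, the change-of-rings sequence
shows that `Tor_i^R(M, N)` and `Tor_{i+2}^R(M, N)` agree up to torsion as soon as `Tor^T(M, N)` is torsion in
the degrees `i + 1` and `i + 2`. -/
theorem good_step [IsNoetherianRing T] (x : T) (hsurj : Function.Surjective (algebraMap T R))
    (hreg : ∀ t : T, x * t = 0 → t = 0) (hx : ∀ t : T, algebraMap T R t = 0 ↔ ∃ s, t = x * s)
    {j : ℕ} (h : Good S T j) : Good S R (j + 1) where
  pd_self := pd_self_step x hsurj hreg hx h.pd_self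
  embed M _ _ _ _ _ hM := by
    let _ : Module T M := Module.compHom M (algebraMap T R)
    have : IsScalarTower T R M := IsScalarTower.of_compHom T R M
    have : IsScalarTower S T M := IsScalarTower.of_algebraMap_smul fun r m => by
      rw [← algebraMap_smul R, ← IsScalarTower.algebraMap_apply, algebraMap_smul]
    exact embed_step x hsurj hreg hx h M hM
  vanish M _ _ _ _ _ N _ _ a s i₀ hM hV := by
    let _ : Module T M := Module.compHom M (algebraMap T R)
    have : IsScalarTower T R M := IsScalarTower.of_compHom T R M
    have : IsScalarTower S T M := IsScalarTower.of_algebraMap_smul fun r m => by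
      rw [← algebraMap_smul R, ← IsScalarTower.algebraMap_apply, algebraMap_smul]
    let _ : Module T N := Module.compHom N (algebraMap T R)
    have : IsScalarTower T R N := IsScalarTower.of_compHom T R N
    have : Module.Finite T R := Module.Finite.of_surjective (Algebra.linearMap T R) hsurj
    have : Module.Finite T M := Module.Finite.trans R M
    obtain ⟨a, rfl⟩ := hsurj a
    obtain ⟨VG, VA, hG, hA, mid, -, left⟩ := exists_change_rings hsurj N x hreg hx M a
    have hT : ∀ i ≥ i₀ + 2, TorTors a M N i := by
      intro i hi
      obtain ⟨i, rfl⟩ := Nat.exists_eq_add_of_le' (show 1 ≤ i by omega)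
      exact (hG i (by omega)).1 (mid i (by omega) (hV i (by omega))
        ((hA i (by omega)).2 (hV (i + 1) (by omega))))
    have hT' := h.vanish M N a (s + 1) (i₀ + 2) (by rwa [add_comm s 1, ← add_assoc]) hT
    have key : ∀ d i, s < i → i₀ ≤ i + d → TorTors (algebraMap T R a) M N i := by
      intro d
      induction d with
      | zero => exact fun i _ hi => hV i hi
      | succ d ih =>
        intro i hi hd
        exact left i (by omega) ((hA (i + 1) (by omega)).2 (ih (i + 2) (by omega) (by omega)))
          ((hG i (by omega)).2 (hT' _ (by omega)))
    exact fun i hi => key i₀ i hi (by omega)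
  period M _ _ _ _ _ N _ _ a s i₀ hM hs hV := by
    let _ : Module T M := Module.compHom M (algebraMap T R)
    have : IsScalarTower T R M := IsScalarTower.of_compHom T R M
    have : IsScalarTower S T M := IsScalarTower.of_algebraMap_smul fun r m => by
      rw [← algebraMap_smul R, ← IsScalarTower.algebraMap_apply, algebraMap_smul]
    let _ : Module T N := Module.compHom N (algebraMap T R)
    have : IsScalarTower T R N := IsScalarTower.of_compHom T R N
    have : Module.Finite T R := Module.Finite.of_surjective (Algebra.linearMap T R) hsurj
    have : Module.Finite T M := Module.Finite.trans R M
    obtain ⟨a, rfl⟩ := hsurj a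
    obtain ⟨VG, VA, hG, hA, mid, right, -⟩ := exists_change_rings hsurj N x hreg hx M a
    have hT : ∀ i, i₀ + 1 + 1 ≤ i → i ≤ i₀ + 1 + j → TorTors a M N i := by
      intro i hi hi'
      obtain ⟨i, rfl⟩ := Nat.exists_eq_add_of_le' (show 1 ≤ i by omega)
      exact (hG i (by omega)).1 (mid i (by omega) (hV i (by omega) (by omega))
        ((hA i (by omega)).2 (hV (i + 1) (by omega) (by omega))))
    have hT' := h.period M N a (s + 1) (i₀ + 1) (by rwa [add_comm s 1, ← add_assoc]) (by omega) hT
    have key : ∀ k, TorTors (algebraMap T R a) M N (i₀ + (j + 1) + 2 * k) := by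
      intro k
      induction k with
      | zero => exact hV _ (by omega) (by omega)
      | succ k ih =>
        have hG' := (hG (i₀ + (j + 1) + 2 * k + 1) (by omega)).2 (by
          have := hT' (k + 1) (by omega)
          rwa [show i₀ + 1 + j + 2 * (k + 1) = i₀ + (j + 1) + 2 * k + 1 + 1 by ring] at this)
        have := (hA _ (by omega)).1 (right _ (by omega) hG' ih)
        rwa [show i₀ + (j + 1) + 2 * (k + 1) = i₀ + (j + 1) + 2 * k + 1 + 1 by ring]
    exact fun k _ => key k
end step

/-! ### Complete intersections -/

theorem good_of_isWeaklyRegular {S : Type} [CommRing S] [IsLocalRing S] [IsNoetherianRing S]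
    (xs : List S) : ∀ (_ : RingTheory.Sequence.IsWeaklyRegular S xs)
    (R : Type) [CommRing R] [Algebra S R] (_ : Function.Surjective (algebraMap S R))
    (_ : ∀ s, algebraMap S R s = 0 ↔ s ∈ Ideal.ofList xs), Good S R xs.length := by
  induction xs using List.reverseRecOn with
  | nil =>
    intro _ R _ _ hsurj hker
    refine good_zero ⟨?_, hsurj⟩
    rw [injective_iff_map_eq_zero]
    intro s hs
    simpa using (hker s).1 hs
  | append_singleton ys x ih =>
    intro hreg R _ _ hsurj hker
    rw [RingTheory.Sequence.isWeaklyRegular_append_iff,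
      RingTheory.Sequence.isWeaklyRegular_singleton_iff, smul_eq_mul, Ideal.mul_top] at hreg
    obtain ⟨hys, hx⟩ := hreg
    have mem : ∀ s, s ∈ Ideal.ofList (ys ++ [x]) ↔ ∃ t, s - x * t ∈ Ideal.ofList ys := by
      intro s
      rw [Ideal.ofList_append, Ideal.ofList_singleton, sup_comm, Ideal.mem_span_singleton_sup]
      constructor
      · rintro ⟨a, b, hb, rfl⟩
        exact ⟨a, by rwa [mul_comm a x, add_sub_cancel_left]⟩
      · rintro ⟨t, ht⟩
        exact ⟨t, _, ht, by ring⟩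
    let T := S ⧸ Ideal.ofList ys
    have hT := ih hys T Ideal.Quotient.mk_surjective (fun s => Ideal.Quotient.eq_zero_iff_mem)
    have hle : ∀ s ∈ Ideal.ofList ys, algebraMap S R s = 0 := fun s hs =>
      (hker s).2 ((mem s).2 ⟨0, by simpa using hs⟩)
    let _ : Algebra T R := (Ideal.Quotient.lift (Ideal.ofList ys) (algebraMap S R) hle).toAlgebra
    have hlift : ∀ s : S, algebraMap T R (Ideal.Quotient.mk _ s) = algebraMap S R s :=
      fun s => rfl
    have : IsScalarTower S T R := IsScalarTower.of_algebraMap_eq fun s => (hlift s).symm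
    rw [List.length_append, List.length_singleton]
    refine good_step (T := T) (Ideal.Quotient.mk _ x) ?_ ?_ ?_ hT
    · intro r
      obtain ⟨s, rfl⟩ := hsurj r
      exact ⟨Ideal.Quotient.mk _ s, rfl⟩
    · intro t ht
      obtain ⟨t, rfl⟩ := Ideal.Quotient.mk_surjective t
      apply hx
      change x • (Ideal.Quotient.mk _ t) = x • (0 : T)
      rw [smul_zero]
      exact ht
    · intro t
      obtain ⟨t, rfl⟩ := Ideal.Quotient.mk_surjective t
      rw [hlift, hker, mem]
      constructor
      · rintro ⟨u, hu⟩
        refine ⟨Ideal.Quotient.mk _ u, ?_⟩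
        rwa [← map_mul, Ideal.Quotient.eq]
      · rintro ⟨u, hu⟩
        obtain ⟨u, rfl⟩ := Ideal.Quotient.mk_surjective u
        refine ⟨u, ?_⟩
        rwa [← map_mul, Ideal.Quotient.eq] at hu

/-! ### Global dimension of regular local rings, and depth versus projective dimension -/

section
variable {S : Type} [CommRing S]
open RingTheory.Sequence

/-- A syzygy of a module on which `rs` is weakly regular has `rs ++ [y]` weakly regular, as long as `rs ++ [y]` is
weakly regular on the covering module. -/
theorem isWeaklyRegular_kernel (rs : List S) (y : S) :
    ∀ {K F M : Type} [AddCommGroup K] [Module S K] [AddCommGroup F] [Module S F]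
    [AddCommGroup M] [Module S M] (f : K →ₗ[S] F) (g : F →ₗ[S] M)
    (_ : Function.Injective f) (_ : Function.Exact f g) (_ : Function.Surjective g)
    (_ : IsWeaklyRegular F (rs ++ [y])) (_ : IsWeaklyRegular M rs),
    IsWeaklyRegular K (rs ++ [y]) := by
  induction rs with
  | nil =>
    intro K F M _ _ _ _ _ _ f g hf hfg hg hF hM
    rw [List.nil_append, isWeaklyRegular_singleton_iff] at *
    exact hF.of_injective f hf
  | cons r rs ih =>
    intro K F M _ _ _ _ _ _ f g hf hfg hg hF hM
    rw [List.cons_append, isWeaklyRegular_cons_iff] at *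
    refine ⟨hF.1.of_injective f hf, ?_⟩
    have inj : Function.Injective (QuotSMulTop.map r f) := by
      have h0 : Function.Exact (0 : PUnit →ₗ[S] K) f := by
        intro k
        rw [← map_zero f, hf.eq_iff]
        exact ⟨fun h => ⟨PUnit.unit, h.symm⟩, fun ⟨_, h⟩ => h.symm⟩
      have := QuotSMulTop.map_first_exact_on_four_term_exact_of_isSMulRegular_last h0 hfg hM.1
      rw [injective_iff_map_eq_zero]
      intro z hz
      obtain ⟨w, rfl⟩ := (this z).1 hz
      obtain ⟨w, rfl⟩ := Submodule.mkQ_surjective _ w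
      rw [Submodule.mkQ_apply, QuotSMulTop.map_apply_mk]
      simp
    exact ih _ _ inj (QuotSMulTop.map_exact r hfg hg) (QuotSMulTop.map_surjective r hg) hF.2 hM.2
end

section
variable {S : Type} [CommRing S]
open RingTheory.Sequence

/-- A natural number can be cancelled from an upper bound, also when `a` is `⊥`, the projective dimension
of the zero module. -/
theorem withBot_enat_aux (a : WithBot ℕ∞) (n : ℕ) (d : ℕ) (h : a + n ≤ ((d + n : ℕ) : WithBot ℕ∞)) :
    a ≤ (d : WithBot ℕ∞) := by
  induction a with
  | bot => exact bot_le
  | coe a =>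
    induction a with
    | top =>
      exfalso
      have : (((⊤ : ℕ∞) + (n : ℕ∞) : ℕ∞) : WithBot ℕ∞) ≤ (((d + n : ℕ) : ℕ∞) : WithBot ℕ∞) := h
      rw [WithBot.coe_le_coe, top_add, top_le_iff] at this
      exact ENat.natCast_ne_top _ this
    | coe a =>
      have : (((a + n : ℕ) : ℕ∞) : WithBot ℕ∞) ≤ (((d + n : ℕ) : ℕ∞) : WithBot ℕ∞) := by exact_mod_cast h
      have : a + n ≤ d + n := by exact_mod_cast this
      have : a ≤ d := by omega
      exact_mod_cast this

theorem pd_iff {M : Type} [AddCommGroup M] [Module S M] {d : ℕ} :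
    PD S M d ↔ projectiveDimension (ModuleCat.of S M) ≤ (d : WithBot ℕ∞) := by
  rw [projectiveDimension_le_iff]; rfl

variable [IsLocalRing S] [IsNoetherianRing S]

/-- If the maximal ideal is generated by a regular sequence `ys` that is weakly regular on `M`, then `M` is
projective: `M/𝔪M` is a sum of copies of `S/𝔪`, whose projective dimension is `length ys`, while it also
equals `pd M + length ys`. -/
theorem pd_zero_of_isWeaklyRegular (ys : List S) (hys : IsRegular S ys)
    (hm : Ideal.ofList ys = IsLocalRing.maximalIdeal S) (M : Type) [AddCommGroup M] [Module S M]
    [Module.Finite S M] (h : IsWeaklyRegular M ys) : PD S M 0 := by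
  cases subsingleton_or_nontrivial M with
  | inl _ => exact pd_of_subsingleton 0
  | inr _ =>
    have mem : ∀ y ∈ ys, y ∈ IsLocalRing.maximalIdeal S := fun y hy => by
      rw [← hm]; exact Ideal.subset_span hy
    have h1 := ModuleCat.projectiveDimension_quotient_eq_add_length_of_isWeaklyRegular
      (ModuleCat.of S S) ys hys.toIsWeaklyRegular mem
    have h2 := ModuleCat.projectiveDimension_quotient_eq_add_length_of_isWeaklyRegular
      (ModuleCat.of S M) ys h mem
    have hk : PD S (S ⧸ Ideal.ofList ys) ys.length := by
      have : PD S (S ⧸ (Ideal.ofList ys • ⊤ : Submodule S S)) ys.length := by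
        rw [pd_iff]
        refine h1.le.trans ?_
        have : projectiveDimension (ModuleCat.of S S) ≤ ((0 : ℕ) : WithBot ℕ∞) :=
          pd_iff.1 (pd_zero_iff.2 inferInstance)
        simpa using add_le_add_left this _
      rwa [smul_eq_mul, Ideal.mul_top] at this
    have : (Ideal.ofList ys).IsMaximal := by rw [hm]; infer_instance
    let _ : Field (S ⧸ Ideal.ofList ys) := Ideal.Quotient.field _
    have : Module.Finite (S ⧸ Ideal.ofList ys) (M ⧸ (Ideal.ofList ys • ⊤ : Submodule S M)) :=
      Module.Finite.of_restrictScalars_finite S _ _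
    have e := (Module.finBasis (S ⧸ Ideal.ofList ys)
      (M ⧸ (Ideal.ofList ys • ⊤ : Submodule S M))).equivFun
    have hq : PD S (M ⧸ (Ideal.ofList ys • ⊤ : Submodule S M)) ys.length :=
      pd_equiv (e.restrictScalars S).symm (pd_pi hk _)
    rw [pd_iff] at hq ⊢
    refine withBot_enat_aux _ ys.length 0 ?_
    rw [zero_add]
    exact h2.symm.le.trans hq

/-- Induction over the part `zs` of the regular system of parameters `ys = rs ++ zs` that is not yet known to
be regular on `M`; passing to a syzygy moves one element from `zs` to `rs`. -/
theorem pd_of_isWeaklyRegular (ys : List S) (hys : IsRegular S ys)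
    (hm : Ideal.ofList ys = IsLocalRing.maximalIdeal S) (zs : List S) : ∀ (rs : List S)
    (_ : rs ++ zs = ys) (M : Type) [AddCommGroup M] [Module S M]
    [Module.Finite S M] (_ : IsWeaklyRegular M rs), PD S M zs.length := by
  induction zs with
  | nil =>
    intro rs h M _ _ _ hM
    rw [List.append_nil] at h
    exact pd_zero_of_isWeaklyRegular ys hys hm M (h ▸ hM)
  | cons z zs ih =>
    intro rs h M _ _ _ hM
    obtain ⟨r, K, p, hp, -, ex, _⟩ := exists_cover (T := S) (M := M)
    have hF : IsWeaklyRegular (Fin r → S) ys := by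
      have : IsWeaklyRegular (S ⊗[S] (Fin r → S)) ys :=
        hys.toIsWeaklyRegular.isWeaklyRegular_rTensor (M₂ := Fin r → S)
      exact ((TensorProduct.lid S (Fin r → S)).isWeaklyRegular_congr ys).1 this
    rw [← h, List.append_cons] at hF
    have hF := ((isWeaklyRegular_append_iff _ _ _).1 hF).1
    have hK := isWeaklyRegular_kernel rs z K.subtype p K.subtype_injective ex hp hF hM
    have := ih (rs ++ [z]) (by rw [← h]; simp) K hK
    exact pd_right K.subtype_injective ex hp this (pd_mono (Nat.zero_le _)
      (pd_zero_iff.2 inferInstance))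

/-- A local ring whose maximal ideal is generated by a regular sequence `ys` has global dimension at most
`length ys` on finite modules. -/
theorem pd_le_of_regular (ys : List S) (hys : IsRegular S ys)
    (hm : Ideal.ofList ys = IsLocalRing.maximalIdeal S) (M : Type) [AddCommGroup M] [Module S M]
    [Module.Finite S M] : PD S M ys.length :=
  pd_of_isWeaklyRegular ys hys hm ys [] rfl M (.nil S M)

/-- `pd M ≤ pd (M/xM) - 1` for `x` in the maximal ideal and regular on `M`. -/
theorem pd_quot (M : Type) [AddCommGroup M] [Module S M] [Module.Finite S M] (x : S)
    (hx : IsSMulRegular M x) (mem : x ∈ IsLocalRing.maximalIdeal S) (d : ℕ)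
    (h : PD S (QuotSMulTop x M) (d + 1)) : PD S M d := by
  rw [pd_iff] at *
  have := ModuleCat.projectiveDimension_quotSMulTop_eq_succ_of_isSMulRegular
    (ModuleCat.of S M) x hx mem
  exact withBot_enat_aux _ 1 d (this.symm.le.trans h)
end

/-! ### Vanishing of `Ext` from the residue field -/

/-- A projective complex augmented to `k`, in elementary terms. Exactness is not recorded: the projective
resolutions used here are exact, but only the condition that the maps compose to zero enters the arguments
below. -/
structure ExtRes (T : Type) [CommRing T] (k : Type) [AddCommGroup k] [Module T k] where
  P : ℕ → ModuleCat.{0} T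
  d : ∀ n, P (n + 1) →ₗ[T] P n
  ε : P 0 →ₗ[T] k
  proj : ∀ n, Module.Projective T (P n)
  surj : Function.Surjective ε
  comp_zero : ε ∘ₗ d 0 = 0
  comp : ∀ n, d n ∘ₗ d (n + 1) = 0

/-- Vanishing of the cohomology of `Hom(P, Y)` in a given degree, where `P` is the complex `Q`. When `P`
resolves `k`, this is the vanishing of `Ext^n(k, Y)`. -/
def ExtRes.E {T : Type} [CommRing T] {k : Type} [AddCommGroup k] [Module T k]
    (Q : ExtRes T k) (Y : Type) [AddCommGroup Y] [Module T Y] : ℕ → Prop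
  | 0 => ∀ f : Q.P 0 →ₗ[T] Y, f ∘ₗ Q.d 0 = 0 → f = 0
  | n + 1 => ∀ f : Q.P (n + 1) →ₗ[T] Y, f ∘ₗ Q.d (n + 1) = 0 →
      ∃ g : Q.P n →ₗ[T] Y, g ∘ₗ Q.d n = f

theorem exists_extRes (T : Type) [CommRing T] (k : Type) [AddCommGroup k] [Module T k] :
    ∃ Q : ExtRes T k, ∀ (Y : Type) [AddCommGroup Y] [Module T Y] (i : ℕ),
      Subsingleton (ExtM T k Y i) ↔ Q.E Y i := by
  let P := projectiveResolution (ModuleCat.of T k)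
  refine ⟨{ P := P.complex.X, d := fun n => (P.complex.d (n+1) n).hom, ε := (P.π.f 0).hom,
            proj := ?_, surj := ?_, comp_zero := ?_, comp := ?_}, ?_⟩
  · intro n
    have h : Projective (P.complex.X n) := P.projective n
    exact (IsProjective.iff_projective (R := T) (P.complex.X n)).2 h
  · exact (ModuleCat.epi_iff_surjective (P.π.f 0)).1 inferInstance
  · exact congrArg ModuleCat.Hom.hom P.complex_d_comp_π_f_zero
  · intro n
    exact congrArg ModuleCat.Hom.hom (P.complex.d_comp_d (n+2) (n+1) n)
  · intro Y _ _ i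
    let K := P.complex.linearYonedaObj T (ModuleCat.of T Y)
    let e : ExtM T k Y i ≃ₗ[T] K.homology i := (P.isoExt i (ModuleCat.of T Y)).toLinearEquiv
    refine (Equiv.subsingleton_congr e.toEquiv).trans ?_
    rw [← ModuleCat.isZero_iff_subsingleton, ← HomologicalComplex.exactAt_iff_isZero_homology]
    cases i with
    | zero =>
      rw [HomologicalComplex.exactAt_iff' K 0 0 1 (by simp) (by simp),
        ShortComplex.moduleCat_exact_iff]
      constructor
      · intro h f hf
        obtain ⟨g, hg⟩ := h (ModuleCat.ofHom f) (ModuleCat.hom_ext hf)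
        have h0 : K.d 0 0 = 0 := K.shape _ _ (by simp)
        have : (K.d 0 0) g = ModuleCat.ofHom f := hg
        rw [h0] at this
        exact (congrArg ModuleCat.Hom.hom this).symm
      · intro h f hf
        refine ⟨0, ?_⟩
        rw [map_zero]
        have : ModuleCat.Hom.hom f = 0 := h (ModuleCat.Hom.hom f) (congrArg ModuleCat.Hom.hom hf)
        exact (ModuleCat.hom_ext this).symm
    | succ i =>
      rw [HomologicalComplex.exactAt_iff' K i (i+1) (i+2) (by simp) (by simp),
        ShortComplex.moduleCat_exact_iff]
      constructor
      · intro h f hf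
        obtain ⟨g, hg⟩ := h (ModuleCat.ofHom f) (ModuleCat.hom_ext hf)
        exact ⟨ModuleCat.Hom.hom g, congrArg ModuleCat.Hom.hom hg⟩
      · intro h f hf
        obtain ⟨g, hg⟩ := h (ModuleCat.Hom.hom f) (congrArg ModuleCat.Hom.hom hf)
        exact ⟨ModuleCat.ofHom g, ModuleCat.hom_ext hg⟩

namespace ExtRes
variable {T : Type} [CommRing T] {k : Type} [AddCommGroup k] [Module T k] (Q : ExtRes T k)
variable {A B C : Type} [AddCommGroup A] [Module T A] [AddCommGroup B] [Module T B]
  [AddCommGroup C] [Module T C]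

theorem lift_surj {g : B →ₗ[T] C} (hg : Function.Surjective g) (n : ℕ) (φ : Q.P n →ₗ[T] C) :
    ∃ ψ : Q.P n →ₗ[T] B, g ∘ₗ ψ = φ :=
  have := Q.proj n
  Module.projective_lifting_property g φ hg

theorem lift_inj {f : A →ₗ[T] B} {g : B →ₗ[T] C} (hf : Function.Injective f)
    (hfg : Function.Exact f g) {X : Type} [AddCommGroup X] [Module T X] (φ : X →ₗ[T] B)
    (h : g ∘ₗ φ = 0) : ∃ ψ : X →ₗ[T] A, f ∘ₗ ψ = φ := by
  have hr : ∀ x, φ x ∈ LinearMap.range f := fun x => (hfg _).1 (LinearMap.congr_fun h x)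
  refine ⟨(LinearEquiv.ofInjective f hf).symm.toLinearMap ∘ₗ φ.codRestrict _ hr, ?_⟩
  ext x
  have := LinearEquiv.ofInjective_symm_apply (f := f) (h := hf) (φ.codRestrict _ hr x)
  exact this

theorem cancel_inj {f : A →ₗ[T] B} (hf : Function.Injective f) {X : Type} [AddCommGroup X]
    [Module T X] (φ ψ : X →ₗ[T] A) (h : f ∘ₗ φ = f ∘ₗ ψ) : φ = ψ :=
  LinearMap.ext fun x => hf (LinearMap.congr_fun h x)

/-- The part `Ext^n(k, B) → Ext^n(k, C) → Ext^{n+1}(k, A)` of the long exact sequence. -/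
theorem e_right {f : A →ₗ[T] B} {g : B →ₗ[T] C} (hf : Function.Injective f)
    (hfg : Function.Exact f g) (hg : Function.Surjective g) (n : ℕ) (hB : Q.E B n)
    (hA : Q.E A (n + 1)) : Q.E C n := by
  have hgf : g ∘ₗ f = 0 := hfg.linearMap_comp_eq_zero
  -- a cocycle with values in `C` lifts to a cocycle with values in `B`
  have key : ∀ φ : Q.P n →ₗ[T] C, φ ∘ₗ Q.d n = 0 →
      ∃ ψ : Q.P n →ₗ[T] B, g ∘ₗ ψ = φ ∧ ψ ∘ₗ Q.d n = 0 := by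
    intro φ h
    obtain ⟨ψ, rfl⟩ := Q.lift_surj hg n φ
    obtain ⟨χ, hχ⟩ := lift_inj hf hfg (ψ ∘ₗ Q.d n) (by rw [← LinearMap.comp_assoc, h])
    obtain ⟨θ, hθ⟩ := hA χ (cancel_inj hf _ _ (by
      rw [← LinearMap.comp_assoc, hχ, LinearMap.comp_assoc, Q.comp, LinearMap.comp_zero,
        LinearMap.comp_zero]))
    refine ⟨ψ - f ∘ₗ θ, ?_, ?_⟩
    · rw [LinearMap.comp_sub, ← LinearMap.comp_assoc, hgf, LinearMap.zero_comp, sub_zero]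
    · rw [LinearMap.sub_comp, LinearMap.comp_assoc, hθ, hχ, sub_self]
  cases n with
  | zero =>
    intro φ h
    obtain ⟨ψ, rfl, h0⟩ := key φ h
    rw [hB ψ h0, LinearMap.comp_zero]
  | succ n =>
    intro φ h
    obtain ⟨ψ, rfl, h0⟩ := key φ h
    obtain ⟨θ, rfl⟩ := hB ψ h0
    exact ⟨g ∘ₗ θ, by rw [LinearMap.comp_assoc]⟩

theorem e_equiv (e : A ≃ₗ[T] B) (n : ℕ) (h : Q.E A n) : Q.E B n := by
  have aux : ∀ {X : Type} [AddCommGroup X] [Module T X] (φ : X →ₗ[T] B),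
      e.toLinearMap ∘ₗ (e.symm.toLinearMap ∘ₗ φ) = φ := by
    intro X _ _ φ; ext x; simp
  cases n with
  | zero =>
    intro φ hφ
    rw [← aux φ, h (e.symm.toLinearMap ∘ₗ φ) (by rw [LinearMap.comp_assoc, hφ, LinearMap.comp_zero]),
      LinearMap.comp_zero]
  | succ n =>
    intro φ hφ
    obtain ⟨ψ, hψ⟩ := h (e.symm.toLinearMap ∘ₗ φ)
      (by rw [LinearMap.comp_assoc, hφ, LinearMap.comp_zero])
    exact ⟨e.toLinearMap ∘ₗ ψ, by rw [LinearMap.comp_assoc, hψ, aux]⟩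

theorem e_pi (r n : ℕ) (h : Q.E A n) : Q.E (Fin r → A) n := by
  cases n with
  | zero =>
    intro φ hφ
    ext x i
    have := h (LinearMap.proj i ∘ₗ φ) (by rw [LinearMap.comp_assoc, hφ, LinearMap.comp_zero])
    exact LinearMap.congr_fun this x
  | succ n =>
    intro φ hφ
    have := fun i => h (LinearMap.proj i ∘ₗ φ)
      (by rw [LinearMap.comp_assoc, hφ, LinearMap.comp_zero])
    choose ψ hψ using this
    refine ⟨LinearMap.pi ψ, ?_⟩
    ext x i
    exact LinearMap.congr_fun (hψ i) x

theorem e_tensor (r n : ℕ) (h : Q.E A n) : Q.E ((Fin r → T) ⊗[T] A) n :=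
  Q.e_equiv (((TensorProduct.comm T _ _).trans (TensorProduct.piScalarRight T T A (Fin r))).symm) n
    (Q.e_pi r n h)

/-- If `Ext^0(k, A) = Hom(k, A)` vanishes, then the annihilator of `k` contains an `A`-regular element. -/
theorem exists_regular [IsNoetherianRing T] [Module.Finite T k] [Module.Finite T A]
    (h : Q.E A 0) : ∃ a ∈ Module.annihilator T k, IsSMulRegular A a := by
  refine IsSMulRegular.subsingleton_linearMap_iff.1 ⟨fun φ ψ => ?_⟩
  have : ∀ φ : k →ₗ[T] A, φ = 0 := by
    intro φ
    have := h (φ ∘ₗ Q.ε) (by rw [LinearMap.comp_assoc, Q.comp_zero, LinearMap.comp_zero])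
    ext x
    obtain ⟨y, rfl⟩ := Q.surj x
    exact LinearMap.congr_fun this y
  rw [this φ, this ψ]

end ExtRes

/-- The inequality `pd_S M ≤ dim S - depth M` of Auslander and Buchsbaum for finite modules over a quotient `R`
of a regular local ring `S`. The hypothesis `depth M ≥ t` is expressed through the vanishing of `Ext` in degrees
below `t`; the induction divides by a regular element. -/
theorem pd_of_depth {S : Type} [CommRing S] [IsLocalRing S] [IsNoetherianRing S]
    (ys : List S) (hys : RingTheory.Sequence.IsRegular S ys)
    (hm : Ideal.ofList ys = IsLocalRing.maximalIdeal S)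
    {R : Type} [CommRing R] [IsLocalRing R] [Algebra S R]
    (hsurj : Function.Surjective (algebraMap S R)) (Q : ExtRes R (IsLocalRing.ResidueField R))
    (t : ℕ) : ∀ (p : ℕ) (_ : ys.length ≤ p + t)
    (M : Type) [AddCommGroup M] [Module R M] [Module S M] [IsScalarTower S R M]
    [Module.Finite R M] (_ : ∀ i < t, Q.E M i), PD S M p := by
  have hR : IsNoetherianRing R := isNoetherianRing_of_surjective S R (algebraMap S R) hsurj
  have hSR : Module.Finite S R :=
    Module.Finite.of_surjective (Algebra.linearMap S R) hsurj
  induction t with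
  | zero =>
    intro p hp M _ _ _ _ _ _
    have : Module.Finite S M := Module.Finite.trans R M
    exact pd_mono (by simpa using hp) (pd_le_of_regular ys hys hm M)
  | succ t ih =>
    intro p hp M _ _ _ _ _ hE
    have : Module.Finite S M := Module.Finite.trans R M
    obtain ⟨a, ha, hreg⟩ := Q.exists_regular (hE 0 (Nat.succ_pos t))
    have ha' : a ∈ IsLocalRing.maximalIdeal R := by
      have : Module.annihilator R (R ⧸ IsLocalRing.maximalIdeal R) = IsLocalRing.maximalIdeal R :=
        Ideal.annihilator_quotient
      rw [← this]; exact ha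
    obtain ⟨b, rfl⟩ := hsurj a
    have hb : b ∈ IsLocalRing.maximalIdeal S := by
      rw [IsLocalRing.mem_maximalIdeal, mem_nonunits_iff] at ha' ⊢
      exact fun h => ha' (h.map _)
    have hreg' : IsSMulRegular M b := by
      intro x y h
      refine hreg ?_
      simpa [algebraMap_smul] using h
    refine pd_quot M b hreg' hb p ?_
    let f : M →ₗ[R] M := LinearMap.lsmul R M (algebraMap S R b)
    have hq : PD S (M ⧸ LinearMap.range f) (p + 1) := by
      refine ih (p + 1) (by omega) (M ⧸ LinearMap.range f) fun i hi => ?_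
      exact Q.e_right (f := f) (g := (LinearMap.range f).mkQ) hreg
        (LinearMap.exact_map_mkQ_range f) (Submodule.mkQ_surjective _) i (hE i (by omega))
        (hE (i + 1) (by omega))
    refine pd_equiv ?_ hq
    refine (Submodule.Quotient.restrictScalarsEquiv S (LinearMap.range f)).symm.trans
      (Submodule.quotEquivOfEq _ _ ?_)
    ext x
    rw [Submodule.restrictScalars_mem, LinearMap.mem_range, Submodule.mem_smul_pointwise_iff_exists]
    simp [f, algebraMap_smul]

/-! ### Iterated pushforwards -/

/-- A module of finite length is torsion with respect to each element of the maximal ideal, since the descending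
chain `aⁿ R t` becomes stationary and `1 - ab` is a unit. -/
theorem torsion_of_isFiniteLength {R : Type} [CommRing R] [IsLocalRing R] {X : Type}
    [AddCommGroup X] [Module R X] (h : IsFiniteLength R X) (a : R)
    (ha : a ∈ IsLocalRing.maximalIdeal R) (t : X) : ∃ n : ℕ, a ^ n • t = 0 := by
  have := (isFiniteLength_iff_isNoetherian_isArtinian.1 h).2
  have : IsArtinian R (Submodule.span R {t}) := inferInstance
  obtain ⟨n, ⟨y, hy⟩, h⟩ := IsArtinian.exists_pow_succ_smul_dvd a
    (⟨t, Submodule.mem_span_singleton_self t⟩ : Submodule.span R {t})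
  obtain ⟨b, rfl⟩ := Submodule.mem_span_singleton.1 hy
  have h : a ^ (n + 1) • b • t = a ^ n • t := congrArg Subtype.val h
  have hu : IsUnit (1 - a * b) := by
    by_contra hc
    have h1 : a * b ∈ IsLocalRing.maximalIdeal R := Ideal.mul_mem_right _ _ ha
    have h2 : 1 - a * b ∈ IsLocalRing.maximalIdeal R :=
      (IsLocalRing.mem_maximalIdeal _).2 hc
    have h3 := Ideal.add_mem _ h2 h1
    rw [sub_add_cancel] at h3
    exact (Ideal.ne_top_iff_one _).1 (IsLocalRing.maximalIdeal.isMaximal R).ne_top h3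
  refine ⟨n, hu.smul_left_cancel.1 ?_⟩
  rw [smul_zero, sub_smul, one_smul, sub_eq_zero]
  refine h.symm.trans ?_
  simp only [smul_smul]
  congr 1
  ring

/-- The `j`-fold pushforward of `M`. Each pushforward `0 → M → R^r → M₁ → 0` raises the degree of `Tor` by one.
The new `Tor_1(M₁, N)`, which is the kernel of `M ⊗ N → R^r ⊗ N`, is torsion for all elements of the maximal
ideal by `Good.vanish`, and it lies in `M ⊗ N`, which has positive depth; hence it is zero. The sequence therefore
stays exact after tensoring with `N`, and `M₁ ⊗ N` has depth one less than `M ⊗ N`. -/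
theorem exists_pushforward {S R : Type} [CommRing S] [CommRing R] [IsLocalRing R] [Algebra S R]
    [IsNoetherianRing R] {c : ℕ} (good : Good S R c)
    (Q : ExtRes R (IsLocalRing.ResidueField R)) (N : Type) [AddCommGroup N] [Module R N]
    [Module.Finite R N] (hN : ∀ i < c, Q.E N i) (j : ℕ) : ∀ (_ : j ≤ c)
    (M : Type) [AddCommGroup M] [Module R M] [Module S M] [IsScalarTower S R M]
    [Module.Finite R M] (_ : PD S M c)
    (_ : ∀ a ∈ IsLocalRing.maximalIdeal R, ∃ i₀, ∀ i ≥ i₀, TorTors a M N i)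
    (_ : ∀ i < j, Q.E (M ⊗[R] N) i),
    ∃ (M' : Type) (_ : AddCommGroup M') (_ : Module R M') (_ : Module S M')
      (_ : IsScalarTower S R M') (_ : Module.Finite R M'), PD S M' c ∧
      (∀ i, 1 ≤ i → i ≤ j → TorTors (1 : R) M' N i) ∧
      ∀ i, 1 ≤ i → (TorTors (1 : R) M' N (i + j) ↔ TorTors (1 : R) M N i) := by
  induction j with
  | zero =>
    intro _ M _ _ _ _ _ hM _ _
    exact ⟨M, _, _, _, inferInstance, inferInstance, hM, fun i _ _ => by omega, fun i _ => Iff.rfl⟩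
  | succ j ih =>
    intro hj M _ _ _ _ _ hM htors hE
    obtain ⟨r, φ, hφ, hC⟩ := good.embed M hM
    obtain ⟨I, hI⟩ : ∃ I, I = LinearMap.range φ := ⟨_, rfl⟩
    rw [← hI] at hC
    have ex : Function.Exact φ I.mkQ := by rw [hI]; exact LinearMap.exact_map_mkQ_range φ
    have hs : Function.Surjective I.mkQ := I.mkQ_surjective
    have htC : ∀ a ∈ IsLocalRing.maximalIdeal R, ∃ i₀, ∀ i ≥ i₀,
        TorTors a ((Fin r → R) ⧸ I) N i := by
      intro a ha
      obtain ⟨i₀, h⟩ := htors a ha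
      refine ⟨i₀ + 2, fun i hi => ?_⟩
      obtain ⟨i, rfl⟩ := Nat.exists_eq_add_of_le' (show 1 ≤ i by omega)
      exact (torTors_shift N hφ ex hs a (by omega)).2 (h i (by omega))
    obtain ⟨a, ha, hreg⟩ := Q.exists_regular (hE 0 (Nat.succ_pos j))
    have ha : a ∈ IsLocalRing.maximalIdeal R := by
      have : Module.annihilator R (R ⧸ IsLocalRing.maximalIdeal R) = IsLocalRing.maximalIdeal R :=
        Ideal.annihilator_quotient
      rw [← this]; exact ha
    have h1 : TorTors a ((Fin r → R) ⧸ I) N 1 := by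
      obtain ⟨i₀, h⟩ := htC a ha
      exact good.vanish ((Fin r → R) ⧸ I) N a 0 i₀ hC h 1 one_pos
    have hinj : Function.Injective (φ.rTensor N) := by
      rw [injective_iff_map_eq_zero]
      intro t ht
      obtain ⟨n, hn⟩ := (torTors_one N hφ ex hs a).1 h1 t ht
      exact hreg.pow n (by simpa using hn)
    have h1' : TorTors (1 : R) ((Fin r → R) ⧸ I) N 1 :=
      (torTors_one N hφ ex hs 1).2 fun t ht =>
        ⟨0, by rw [(injective_iff_map_eq_zero _).1 hinj t ht, smul_zero]⟩
    have hE' : ∀ i < j, Q.E (((Fin r → R) ⧸ I) ⊗[R] N) i := fun i hi =>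
      Q.e_right hinj (rTensor_exact N ex hs) (LinearMap.rTensor_surjective N hs) i
        (Q.e_tensor r i (hN i (by omega))) (hE (i + 1) (by omega))
    obtain ⟨M', _, _, _, _, _, hM', hv, hiff⟩ := ih (by omega) ((Fin r → R) ⧸ I) hC htC hE'
    refine ⟨M', _, _, _, inferInstance, inferInstance, hM', fun i hi hi' => ?_, fun i hi => ?_⟩
    · rcases Nat.lt_or_ge j i with h | h
      · obtain rfl : i = 1 + j := by omega
        exact (hiff 1 le_rfl).2 h1'
      · exact hv i hi h
    · rw [← torTors_shift N hφ ex hs 1 hi, ← hiff (i + 1) (by omega)]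
      rw [show i + 1 + j = i + (j + 1) by omega]

theorem subsingleton_ext_of_isMCM {R : Type} [CommRing R] [IsLocalRing R] {c : ℕ}
    (hc : (c : WithBot ℕ∞) = ringKrullDim R) {M : Type} [AddCommGroup M] [Module R M]
    (hM : IsMCM R M) (i : ℕ) (hi : i < c) :
    Subsingleton (ExtM R (IsLocalRing.ResidueField R) M i) := by
  by_contra h
  have h1 : depthM R M ≤ (i : ℕ∞) := sInf_le ⟨i, rfl, h⟩
  have h2 : (depthM R M : WithBot ℕ∞) = ((c : ℕ∞) : WithBot ℕ∞) := hM.2.2.trans hc.symm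
  rw [WithBot.coe_inj.1 h2] at h1
  exact absurd (Nat.cast_le.1 h1) (by omega)

/-- The regular sequence generating the maximal ideal of `S` has length `dim (S/xs) + length xs`. -/
theorem length_of_krullDim {S : Type} [CommRing S] [IsLocalRing S] [IsNoetherianRing S]
    {xs ys : List S} (hx : RingTheory.Sequence.IsRegular S xs)
    (hy : RingTheory.Sequence.IsRegular S ys) (hm : Ideal.ofList ys = IsLocalRing.maximalIdeal S)
    {c : ℕ} (hc : (c : WithBot ℕ∞) = ringKrullDim (S ⧸ Ideal.ofList xs)) :
    ys.length = c + xs.length := by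
  have h1 := ringKrullDim_add_length_eq_ringKrullDim_of_isRegular xs hx
  have h2 := ringKrullDim_add_length_eq_ringKrullDim_of_isRegular ys hy
  have : (Ideal.ofList ys).IsMaximal := by rw [hm]; infer_instance
  have h3 : ringKrullDim (S ⧸ Ideal.ofList ys) = 0 :=
    let _ : Field (S ⧸ Ideal.ofList ys) := Ideal.Quotient.field _
    ringKrullDim_eq_zero_of_field _
  rw [h3, zero_add, ← h1, ← hc] at h2
  exact_mod_cast h2

/-- Let `R` be a local complete intersection with `cod R = dim R ≥ 1`,
and `M`, `N` maximal Cohen-Macaulay modules such that `M ⊗_R N` is maximal Cohen-Macaulay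
and `Tor_i(M,N)` has finite length for `i ≫ 0`. Then `Tor_{2i}(M,N) = 0` for all `i ≥ 1`. -/
theorem stmt12 (R : Type) [CommRing R] [IsLocalRing R]
    (S : Type) [CommRing S] [IsLocalRing S] (hS : IsRegularLocal S)
    (xs : List S) (hreg : RingTheory.Sequence.IsRegular S xs)
    (hx2 : ∀ x ∈ xs, x ∈ (IsLocalRing.maximalIdeal S) ^ 2)
    (e : (S ⧸ Ideal.span {x | x ∈ xs}) ≃+* R)
    (hcod : (xs.length : WithBot ℕ∞) = ringKrullDim R) (hpos : 1 ≤ xs.length)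
    (M N : Type) [AddCommGroup M] [Module R M] [AddCommGroup N] [Module R N]
    [Module.Finite R M] [Module.Finite R N]
    (hMCM : IsMCM R M) (hNCM : IsMCM R N) (hMN : IsMCM R (M ⊗[R] N))
    (hlen : ∃ i₀ : ℕ, ∀ i ≥ i₀, IsFiniteLength R (TorM R M N i)) :
    ∀ i : ℕ, 1 ≤ i → Subsingleton (TorM R M N (2 * i)) := by
  obtain ⟨hnoeth, ys, hys, hm⟩ := hS
  change Ideal.ofList ys = _ at hm
  let algSR : Algebra S R :=
    (e.toRingHom.comp (Ideal.Quotient.mk (Ideal.span {x | x ∈ xs}))).toAlgebra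
  have hsurj : Function.Surjective (algebraMap S R) :=
    e.surjective.comp Ideal.Quotient.mk_surjective
  have hker : ∀ s, algebraMap S R s = 0 ↔ s ∈ Ideal.ofList xs := by
    intro s
    change e (Ideal.Quotient.mk _ s) = 0 ↔ _
    rw [EmbeddingLike.map_eq_zero_iff, Ideal.Quotient.eq_zero_iff_mem]
  have hR : IsNoetherianRing R := isNoetherianRing_of_surjective S R (algebraMap S R) hsurj
  have good : Good S R xs.length := good_of_isWeaklyRegular xs hreg.toIsWeaklyRegular R hsurj hker
  have hlen' : ys.length = xs.length + xs.length :=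
    length_of_krullDim hreg hys hm (hcod.trans (ringKrullDim_eq_of_ringEquiv e).symm)
  obtain ⟨Q, hQ⟩ := exists_extRes R (IsLocalRing.ResidueField R)
  have hE : ∀ {X : Type} [AddCommGroup X] [Module R X], IsMCM R X →
      ∀ i < xs.length, Q.E X i := fun hX i hi =>
    (hQ _ i).1 (subsingleton_ext_of_isMCM hcod hX i hi)
  let modSM : Module S M := Module.compHom M (algebraMap S R)
  have towerM : IsScalarTower S R M := IsScalarTower.of_compHom S R M
  have hM : PD S M xs.length := pd_of_depth ys hys hm hsurj Q xs.length xs.length hlen'.le M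
    (hE hMCM)
  have htors : ∀ a ∈ IsLocalRing.maximalIdeal R, ∃ i₀, ∀ i ≥ i₀, TorTors a M N i := by
    intro a ha
    obtain ⟨i₀, h⟩ := hlen
    exact ⟨i₀, fun i hi t => torsion_of_isFiniteLength (h i hi) a ha t⟩
  obtain ⟨M', _, _, _, _, _, hM', hv, hiff⟩ :=
    exists_pushforward good Q N (hE hNCM) xs.length le_rfl M hM htors (hE hMN)
  intro i hi
  -- `Tor` of the `c`-fold pushforward vanishes in degrees `1, …, c`, hence in all degrees `c + 2i`, and these
  -- are the degrees `2i` for `M`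
  have h := good.period M' N (1 : R) 0 0 hM' le_rfl
    (fun i h1 h2 => hv i (by omega) (by omega)) i hi
  rw [show 0 + xs.length + 2 * i = 2 * i + xs.length by omega, hiff _ (by omega)] at h
  have hz : ∀ t : TorM R M N (2 * i), t = 0 := fun t => by
    obtain ⟨n, hn⟩ := h t
    rwa [one_pow, one_smul] at hn
  exact ⟨fun a b => (hz a).trans (hz b).symm⟩
end
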